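/- arXiv:2010.08994 — 2 statements merged into one kernel-verified Lean document; each statement's English description precedes it below -/
import Mathlib

section
/- There is an absolute constant C > 0 such that the following holds. Let f : {0,1}^n → {0,1} be a boolean function with sparsity spar(f) = r ≥ 2. Then for every z ∈ {0,1}^n, the family W(f,z) = {w ⊆ [n]∖z : f(z ∨ w) ≠ f(z)} has a hitting set of size at most C·(log₂ r)^5; that is, HSC(f) = O((log r)^5). -/
/-- The coefficient of the monomial `s` in the unique multilinear polynomial computing
`f : {0,1}^n → ℝ` (subsets of `Fin n` identified with points of the cube),
given by Möbius inversion. -/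
noncomputable def coeff {n : ℕ} (f : Finset (Fin n) → ℝ) (s : Finset (Fin n)) : ℝ :=
  ∑ t ∈ s.powerset, (-1 : ℝ) ^ (s.card - t.card) * f t

/-- The sparsity of `f`: the number of nonzero coefficients. -/
noncomputable def sparsity {n : ℕ} (f : Finset (Fin n) → ℝ) : ℕ :=
  {s : Finset (Fin n) | coeff f s ≠ 0}.ncard

/-- The set system of non-constant monomials of `f`. -/
def mon {n : ℕ} (f : Finset (Fin n) → ℝ) : Set (Finset (Fin n)) :=
  {s | coeff f s ≠ 0 ∧ s ≠ ∅}

/-- `W f z`: the family of sets `w ⊆ [n] ∖ z` such that `f (z ∨ w) ≠ f z`. -/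
def W {n : ℕ} (f : Finset (Fin n) → ℝ) (z : Finset (Fin n)) : Set (Finset (Fin n)) :=
  {w | w ⊆ zᶜ ∧ f (z ∪ w) ≠ f z}


open Finset Polynomial in
lemma aux_prod (a D : ℕ) (h : a + 1 ≤ D) :
    ∏ j ∈ (Finset.range D).erase a, (((j:ℝ)+1)^2 / |((a:ℝ)+1)^2 - ((j:ℝ)+1)^2|)
      = 2 * (D.factorial : ℝ)^2 / ((D - (a+1)).factorial * (D + (a+1)).factorial) := by
  induction D, h using Nat.le_induction with
  | base =>
    have h1 : (Finset.range (a+1)).erase a = Finset.range a := by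
      ext x; simp; omega
    rw [h1]
    have h2 : ∀ j ∈ Finset.range a, (((j:ℝ)+1)^2 / |((a:ℝ)+1)^2 - ((j:ℝ)+1)^2|)
        = ((j+1 : ℕ):ℝ)^2 / (((a - j : ℕ) : ℝ) * ((a+1+1+j : ℕ) : ℝ)) := by
      intro j hj
      have hj' : j < a := by simpa using hj
      have : (j:ℝ) < a := by exact_mod_cast hj'
      rw [abs_of_pos (by nlinarith), Nat.cast_sub hj'.le]
      push_cast; congr 1; ring
    rw [Finset.prod_congr rfl h2, Finset.prod_div_distrib, Finset.prod_pow, Finset.prod_mul_distrib,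
      ← Nat.cast_prod, ← Nat.cast_prod, ← Nat.cast_prod, Finset.prod_range_add_one_eq_factorial,
      ← Nat.descFactorial_eq_prod_range, ← Nat.ascFactorial_eq_prod_range, Nat.descFactorial_self]
    have h3 := Nat.factorial_mul_ascFactorial (a+1) a
    have h4 : ((a+1).factorial : ℝ) * ((a+1+1).ascFactorial a : ℕ) = (a+1+a).factorial := by
      exact_mod_cast h3
    have h5 : (a+1+(a+1)).factorial = (a+1+a+1) * (a+1+a).factorial := by
      rw [← Nat.factorial_succ]; rfl
    rw [h5]; push_cast; rw [← h4, Nat.factorial_succ]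
    have h6 : (((a+1+1).ascFactorial a : ℕ) : ℝ) ≠ 0 := by
      have := Nat.ascFactorial_pos (a+1) a
      positivity
    have h7 : (a.factorial : ℝ) ≠ 0 := by positivity
    have h8 : (a:ℝ)+1 ≠ 0 := by positivity
    simp
    field_simp
    ring
  | succ D hD ih =>
    have h1 : (Finset.range (D+1)).erase a = insert D ((Finset.range D).erase a) := by
      ext x; simp; omega
    rw [h1, Finset.prod_insert (by simp), ih]
    have h2 : D + 1 - (a+1) = (D - (a+1)) + 1 := by omega
    have h3 : D + 1 + (a+1) = (D + (a+1)) + 1 := by omega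
    rw [h2, h3, Nat.factorial_succ, Nat.factorial_succ, Nat.factorial_succ]
    have hlt : (a:ℝ) + 1 ≤ D := by exact_mod_cast hD
    rw [abs_of_neg (by nlinarith [(Nat.cast_nonneg a : (0:ℝ) ≤ a)])]
    push_cast [Nat.cast_sub hD]
    have e1 : -(((a:ℝ)+1)^2 - ((D:ℝ)+1)^2) = ((D:ℝ) - (a+1) + 1) * (D + (a+1)+1) := by ring
    rw [e1]
    have p1 : (D:ℝ) - (a+1) + 1 ≠ 0 := by nlinarith
    have p2 : (D:ℝ) + (a+1) + 1 ≠ 0 := by positivity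
    have p3 : ((D - (a+1)).factorial : ℝ) ≠ 0 := by positivity
    have p4 : ((D + (a+1)).factorial : ℝ) ≠ 0 := by positivity
    field_simp

lemma aux_prod_le (a D : ℕ) (h : a + 1 ≤ D) :
    ∏ j ∈ (Finset.range D).erase a, (((j:ℝ)+1)^2 / |((a:ℝ)+1)^2 - ((j:ℝ)+1)^2|) ≤ 2 := by
  rw [aux_prod a D h]
  have h1 := Nat.choose_le_centralBinom (D - (a+1)) D
  have h2 := Nat.choose_mul_factorial_mul_factorial (show D - (a+1) ≤ 2 * D by omega)
  have h3 := Nat.choose_mul_factorial_mul_factorial (show D ≤ 2 * D by omega)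
  have e : 2 * D - (D - (a+1)) = D + (a+1) := by omega
  have e' : 2 * D - D = D := by omega
  rw [e] at h2
  rw [e'] at h3
  rw [Nat.centralBinom_eq_two_mul_choose] at h1
  rw [div_le_iff₀ (by positivity)]
  have key : D.factorial ^ 2 ≤ (D - (a+1)).factorial * (D + (a+1)).factorial := by
    have hp : 0 < (2*D).choose D := Nat.choose_pos (by omega)
    refine Nat.le_of_mul_le_mul_left ?_ hp
    calc (2*D).choose D * D.factorial^2 = (2 * D).factorial := by rw [← h3]; ring
      _ = (2*D).choose (D-(a+1)) * ((D - (a+1)).factorial * (D + (a+1)).factorial) := by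
          rw [← h2]; ring
      _ ≤ _ := Nat.mul_le_mul_right _ h1
  have : (D.factorial : ℝ) ^ 2 ≤ (D - (a+1)).factorial * (D + (a+1)).factorial := by
    exact_mod_cast key
  nlinarith

lemma aux_sum (D : ℕ) : ∑ i ∈ Finset.range D, 1 / ((i:ℝ)+1)^2 ≤ 2 - 1 / (D:ℝ) := by
  induction D with
  | zero => simp
  | succ D ih =>
    rw [Finset.sum_range_succ]
    rcases Nat.eq_zero_or_pos D with rfl | hD
    · norm_num
    · have hD' : (0:ℝ) < D := by exact_mod_cast hD
      have : 1 / ((D:ℝ)+1)^2 ≤ 1/(D:ℝ) - 1/((D:ℝ)+1) := by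
        rw [div_sub_div _ _ (by positivity) (by positivity), div_le_div_iff₀ (by positivity) (by positivity)]
        nlinarith
      push_cast
      linarith

lemma lag (D : ℕ) (h : Polynomial ℝ) (hd : h.degree < D) (A : ℝ) (hA0 : 0 ≤ A)
    (hA : ∀ i ∈ Finset.range D, |h.eval (((i:ℝ)+1)^2)| ≤ A / ((i:ℝ)+1)^2) :
    |h.eval 0| ≤ 4 * A := by
  have hinj : Set.InjOn (fun j : ℕ => ((j:ℝ)+1)^2) (Finset.range D) := by
    intro x _ y _ hxy
    have := (pow_left_inj₀ (by positivity) (by positivity) (two_ne_zero)).1 hxy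
    simpa using this
  have h1 := Lagrange.eq_interpolate (s := Finset.range D) (v := fun j : ℕ => ((j:ℝ)+1)^2) (f := h)
    hinj (by simpa using hd)
  rw [h1, Lagrange.interpolate_apply, Polynomial.eval_finsetSum]
  refine (Finset.abs_sum_le_sum_abs _ _).trans ?_
  calc _ ≤ ∑ i ∈ Finset.range D, (2 * A) * (1 / ((i:ℝ)+1)^2) := ?_
    _ ≤ _ := by
      rw [← Finset.mul_sum]
      have := aux_sum D
      have h2 : (0:ℝ) ≤ 1 / D := by positivity
      nlinarith
  refine Finset.sum_le_sum fun i hi => ?_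
  have hb : |(Lagrange.basis (Finset.range D) (fun j : ℕ => ((j:ℝ)+1)^2) i).eval 0| ≤ 2 := by
    refine le_trans (le_of_eq ?_) (aux_prod_le i D (by simpa using hi))
    rw [Lagrange.basis, Polynomial.eval_prod, Finset.abs_prod]
    refine Finset.prod_congr rfl fun j hj => ?_
    simp [Lagrange.basisDivisor, abs_mul, abs_inv]
    rw [div_eq_inv_mul]
  rw [Polynomial.eval_mul, abs_mul, Polynomial.eval_C]
  calc _ ≤ A / ((i:ℝ)+1)^2 * 2 := mul_le_mul (hA i hi) hb (abs_nonneg _) (by positivity)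
    _ = _ := by ring

lemma coeff_inv {n : ℕ} (f : Finset (Fin n) → ℝ) (x : Finset (Fin n)) :
    ∑ s ∈ x.powerset, coeff f s = f x := by
  have key : ∀ t, t ⊆ x → ∑ s ∈ Finset.Icc t x, (-1 : ℝ) ^ (s.card - t.card)
      = if t = x then 1 else 0 := by
    intro t ht
    rw [Finset.Icc_eq_image_powerset ht, Finset.sum_image]
    · have h1 : ∀ u ∈ (x \ t).powerset, (-1:ℝ)^((t ∪ u).card - t.card) = (((-1:ℤ)^u.card : ℤ) : ℝ) := by
        intro u hu
        have : Disjoint t u := by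
          rw [Finset.mem_powerset] at hu
          exact Finset.disjoint_of_subset_right hu Finset.disjoint_sdiff
        rw [Finset.card_union_of_disjoint this]
        simp
      rw [Finset.sum_congr rfl h1, ← Int.cast_sum, Finset.sum_powerset_neg_one_pow_card]
      have : x \ t = ∅ ↔ t = x := by
        rw [Finset.sdiff_eq_empty_iff_subset]
        exact ⟨fun h => Finset.Subset.antisymm ht h, fun h => h ▸ le_rfl⟩
      simp [this]
    · intro u hu v hv huv
      simp only [Finset.coe_powerset, Set.mem_preimage, Set.mem_powerset_iff, Finset.coe_subset] at hu hv
      have d1 : Disjoint t u := Finset.disjoint_of_subset_right hu Finset.disjoint_sdiff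
      have d2 : Disjoint t v := Finset.disjoint_of_subset_right hv Finset.disjoint_sdiff
      have := congrArg (· \ t) huv
      simpa [Finset.union_sdiff_cancel_left d1, Finset.union_sdiff_cancel_left d2] using this
  unfold coeff
  rw [Finset.sum_comm' (t' := x.powerset) (s' := fun t => Finset.Icc t x)]
  · calc _ = ∑ t ∈ x.powerset, (if t = x then 1 else 0) * f t := by
          refine Finset.sum_congr rfl fun t ht => ?_
          rw [← Finset.sum_mul, key t (Finset.mem_powerset.1 ht)]
      _ = f x := by simp
  · intro s t
    simp only [Finset.mem_powerset, Finset.mem_Icc]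
    constructor
    · rintro ⟨h1, h2⟩; exact ⟨⟨h2, h1⟩, h2.trans h1⟩
    · rintro ⟨⟨h1, h2⟩, _⟩; exact ⟨h2, h1⟩

lemma coeff_uniq {n : ℕ} (G a : Finset (Fin n) → ℝ)
    (h : ∀ y, G y = ∑ s ∈ y.powerset, a s) (T : Finset (Fin n)) : coeff G T = a T := by
  induction T using Finset.strongInduction with
  | H T ih =>
    have h1 := coeff_inv G T
    rw [h T, ← Finset.insert_erase (Finset.mem_powerset_self T),
      Finset.sum_insert (by simp), Finset.sum_insert (by simp)] at h1
    have : ∑ s ∈ T.powerset.erase T, coeff G s = ∑ s ∈ T.powerset.erase T, a s := by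
      refine Finset.sum_congr rfl fun s hs => ih s ?_
      rw [Finset.mem_erase, Finset.mem_powerset] at hs
      exact hs.2.ssubset_of_ne hs.1
    linarith

lemma abs_coeff_le {n : ℕ} (G : Finset (Fin n) → ℝ) (hG : ∀ x, G x = 0 ∨ G x = 1)
    (T : Finset (Fin n)) : |coeff G T| ≤ 2 ^ T.card := by
  unfold coeff
  refine (Finset.abs_sum_le_sum_abs _ _).trans ?_
  calc _ ≤ ∑ t ∈ T.powerset, (1:ℝ) := by
        refine Finset.sum_le_sum fun t _ => ?_
        rcases hG t with h | h <;> simp [h]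
    _ = _ := by simp

open Classical in
lemma coeff_merge {n k : ℕ} (f : Finset (Fin n) → ℝ) (φ : Finset (Fin k) → Finset (Fin n))
    (τ : Finset (Fin n) → Finset (Fin k)) (V : Finset (Fin n) → Prop)
    (h : ∀ s y, s ⊆ φ y ↔ V s ∧ τ s ⊆ y) (T : Finset (Fin k)) :
    coeff (fun y => f (φ y)) T = ∑ s with V s ∧ τ s = T, coeff f s := by
  refine coeff_uniq _ (fun T => ∑ s with V s ∧ τ s = T, coeff f s) (fun y => ?_) T
  rw [← coeff_inv f (φ y)]
  simp only [Finset.sum_filter]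
  rw [Finset.sum_comm]
  have h1 : (φ y).powerset = Finset.univ.filter (fun s => V s ∧ τ s ⊆ y) := by
    ext s; simp [h]
  rw [h1, Finset.sum_filter]
  refine Finset.sum_congr rfl fun s _ => ?_
  by_cases hV : V s <;> simp [hV]

lemma supp_merge {n k : ℕ} (f : Finset (Fin n) → ℝ) (φ : Finset (Fin k) → Finset (Fin n))
    (τ : Finset (Fin n) → Finset (Fin k)) (V : Finset (Fin n) → Prop)
    (h : ∀ s y, s ⊆ φ y ↔ V s ∧ τ s ⊆ y) :
    {T | coeff (fun y => f (φ y)) T ≠ 0} ⊆ τ '' {s | coeff f s ≠ 0} := by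
  classical
  intro T hT
  rw [Set.mem_ofPred_eq, coeff_merge f φ τ V h] at hT
  obtain ⟨s, hs, hs'⟩ := Finset.exists_ne_zero_of_sum_ne_zero hT
  simp at hs
  exact ⟨s, hs', hs.2⟩

lemma spar_merge {n k : ℕ} (f : Finset (Fin n) → ℝ) (φ : Finset (Fin k) → Finset (Fin n))
    (τ : Finset (Fin n) → Finset (Fin k)) (V : Finset (Fin n) → Prop)
    (h : ∀ s y, s ⊆ φ y ↔ V s ∧ τ s ⊆ y) :
    sparsity (fun y => f (φ y)) ≤ sparsity f :=
  (Set.ncard_le_ncard (supp_merge f φ τ V h) (Set.toFinite _)).trans (Set.ncard_image_le (Set.toFinite _))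

lemma multilin {k : ℕ} (G : Finset (Fin k) → ℝ) (t : ℝ) :
    ∑ T, coeff G T * t ^ T.card
      = ∑ y : Finset (Fin k), t ^ y.card * (1 - t) ^ (Finset.univ \ y).card * G y := by
  have key : ∀ T : Finset (Fin k), t ^ T.card
      = ∑ y : Finset (Fin k), if T ⊆ y then t ^ y.card * (1 - t) ^ (Finset.univ \ y).card else 0 := by
    intro T
    have h := Finset.prod_add (fun _ : Fin k => t) (fun i => if i ∈ T then 0 else 1 - t) Finset.univ
    have hl : ∏ i : Fin k, (t + if i ∈ T then 0 else 1 - t) = t ^ T.card := by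
      have : ∀ i : Fin k, (t + if i ∈ T then 0 else 1 - t) = if i ∈ T then t else 1 := by
        intro i; split_ifs <;> ring
      rw [Finset.prod_congr rfl fun i _ => this i, Finset.prod_ite]
      simp
    rw [← hl, h, Finset.powerset_univ]
    refine Finset.sum_congr rfl fun y _ => ?_
    split_ifs with hT
    · rw [Finset.prod_const]
      congr 1
      rw [← Finset.prod_const]
      refine Finset.prod_congr rfl fun i hi => ?_
      rw [if_neg]
      intro hiT
      simp at hi
      exact hi (hT hiT)
    · obtain ⟨i, hi, hi'⟩ := Finset.not_subset.1 hT
      rw [Finset.prod_eq_zero (i := i) (s := Finset.univ \ y)]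
      · simp
      · simpa using hi'
      · simp [hi]
  calc _ = ∑ T, ∑ y : Finset (Fin k), if T ⊆ y then
            t ^ y.card * (1 - t) ^ (Finset.univ \ y).card * coeff G T else 0 := by
        refine Finset.sum_congr rfl fun T _ => ?_
        rw [key T, Finset.mul_sum]
        refine Finset.sum_congr rfl fun y _ => ?_
        split_ifs <;> ring
    _ = _ := by
        rw [Finset.sum_comm]
        refine Finset.sum_congr rfl fun y _ => ?_
        rw [← coeff_inv G y, Finset.mul_sum, ← Finset.sum_filter]
        refine Finset.sum_congr ?_ fun _ _ => rfl
        ext T; simp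

lemma multilin_mem {k : ℕ} (G : Finset (Fin k) → ℝ) (hG : ∀ x, G x = 0 ∨ G x = 1) (t : ℝ)
    (h0 : 0 ≤ t) (h1 : t ≤ 1) :
    0 ≤ ∑ T, coeff G T * t ^ T.card ∧ ∑ T, coeff G T * t ^ T.card ≤ 1 := by
  have hw : ∀ y : Finset (Fin k), 0 ≤ t ^ y.card * (1 - t) ^ (Finset.univ \ y).card := by
    intro y
    have : 0 ≤ 1 - t := by linarith
    positivity
  rw [multilin]
  constructor
  · refine Finset.sum_nonneg fun y _ => ?_
    rcases hG y with h | h <;> simp only [h, mul_zero, mul_one, le_refl, hw]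
  · have h := Finset.prod_add (fun _ : Fin k => t) (fun _ => 1 - t) Finset.univ
    simp only [Finset.prod_const, Finset.powerset_univ] at h
    calc _ ≤ ∑ y : Finset (Fin k), t ^ y.card * (1 - t) ^ (Finset.univ \ y).card := by
          refine Finset.sum_le_sum fun y _ => ?_
          rcases hG y with h | h <;> simp only [h, mul_zero, mul_one, le_refl, hw]
      _ = 1 := by rw [← h]; simp

lemma coeff_empty {k : ℕ} (G : Finset (Fin k) → ℝ) : coeff G ∅ = G ∅ := by
  simp [coeff]

lemma coeff_single {k : ℕ} (G : Finset (Fin k) → ℝ) (j : Fin k) :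
    coeff G {j} = G {j} - G ∅ := by
  have := coeff_inv G {j}
  have h2 : ({j} : Finset (Fin k)).powerset = {∅, {j}} := by
    ext s; simp [Finset.subset_singleton_iff]
  rw [h2, Finset.sum_pair (Finset.singleton_ne_empty j).symm, coeff_empty] at this
  linarith

open Classical in
lemma sens_bound {k D : ℕ} (hD : 1 ≤ D) (G : Finset (Fin k) → ℝ) (hG : ∀ x, G x = 0 ∨ G x = 1)
    (hs : sparsity G ≤ 2 ^ D) (hj : ∀ j, G {j} ≠ G ∅) : k ≤ 32 * D ^ 2 := by
  have hD0 : (0:ℝ) < D := by exact_mod_cast hD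
  have hD1 : (1:ℝ) ≤ D := by exact_mod_cast hD
  set c : ℝ := 1 / (4 * D ^ 2) with hc
  have hc0 : 0 < c := by positivity
  let S : Finset (Finset (Fin k)) := Finset.univ.filter fun T => 1 ≤ T.card ∧ T.card ≤ D
  let h : Polynomial ℝ := ∑ T ∈ S, Polynomial.C (coeff G T * c ^ T.card) * Polynomial.X ^ (T.card - 1)
  have hdeg : h.degree < D := by
    refine (Polynomial.degree_sum_le _ _).trans_lt ?_
    rw [Finset.sup_lt_iff (by exact_mod_cast WithBot.bot_lt_coe D)]
    intro T hT
    refine (Polynomial.degree_C_mul_X_pow_le _ _).trans_lt ?_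
    have := (Finset.mem_filter.1 hT).2
    exact_mod_cast (by omega : T.card - 1 < D)
  have heval : ∀ x, x * h.eval x = ∑ T ∈ S, coeff G T * (c * x) ^ T.card := by
    intro x
    simp only [h, Polynomial.eval_finsetSum, Finset.mul_sum]
    refine Finset.sum_congr rfl fun T hT => ?_
    have := (Finset.mem_filter.1 hT).2
    simp only [Polynomial.eval_mul, Polynomial.eval_C, Polynomial.eval_pow, Polynomial.eval_X]
    obtain ⟨m, hm⟩ : ∃ m, T.card = m + 1 := ⟨T.card - 1, by omega⟩
    rw [hm]; simp; ring
  have htail : ∀ t : ℝ, 0 ≤ t → t ≤ 1/4 →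
      |∑ T with ¬ T.card ≤ D, coeff G T * t ^ T.card| ≤ 1 := by
    intro t ht0 ht1
    refine (Finset.abs_sum_le_sum_abs _ _).trans ?_
    calc _ ≤ ∑ T : Finset (Fin k) with coeff G T ≠ 0, (1/2:ℝ)^D := by
          rw [Finset.sum_filter, Finset.sum_filter]
          refine Finset.sum_le_sum fun T _ => ?_
          by_cases h0 : coeff G T = 0
          · simp [h0]
          · rw [if_pos h0]
            split_ifs with hT
            · positivity
            · have h1 := abs_coeff_le G hG T
              rw [abs_mul, abs_of_nonneg (by positivity : 0 ≤ t ^ T.card)]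
              calc _ ≤ (2:ℝ)^T.card * (1/4)^T.card := by gcongr
                _ = (1/2:ℝ)^T.card := by rw [← mul_pow]; norm_num
                _ ≤ _ := pow_le_pow_of_le_one (by norm_num) (by norm_num) (by omega)
      _ = (sparsity G : ℝ) * (1/2)^D := by
          rw [Finset.sum_const, nsmul_eq_mul]
          congr 2
          unfold sparsity
          rw [Set.ncard_eq_toFinset_card']
          congr 1; ext; simp
      _ ≤ (2:ℝ)^D * (1/2)^D := by
          gcongr; exact_mod_cast hs
      _ = 1 := by rw [← mul_pow]; norm_num
  have hbd : ∀ t : ℝ, 0 ≤ t → t ≤ 1/4 → |∑ T ∈ S, coeff G T * t ^ T.card| ≤ 2 := by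
    intro t ht0 ht1
    have h1 := htail t ht0 ht1
    have h2 := multilin_mem G hG t ht0 (by linarith)
    have h3 : ∑ T, coeff G T * t ^ T.card = (∑ T ∈ S, coeff G T * t ^ T.card) + G ∅
        + ∑ T with ¬ T.card ≤ D, coeff G T * t ^ T.card := by
      rw [← Finset.sum_filter_add_sum_filter_not Finset.univ (fun T : Finset (Fin k) => T.card ≤ D)]
      congr 1
      have : Finset.univ.filter (fun T : Finset (Fin k) => T.card ≤ D) = insert ∅ S := by
        ext T
        simp only [S, Finset.mem_filter, Finset.mem_univ, true_and, Finset.mem_insert,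
          Nat.one_le_iff_ne_zero, Finset.card_ne_zero, Finset.nonempty_iff_ne_empty]
        by_cases hT : T = ∅ <;> simp [hT]
      rw [this, Finset.sum_insert (by simp [S]), coeff_empty]
      simp; ring
    have h4 : 0 ≤ G ∅ ∧ G ∅ ≤ 1 := by rcases hG ∅ with h | h <;> simp [h]
    rw [abs_le] at h1 ⊢
    constructor <;> linarith
  have hl := lag D h hdeg 2 (by norm_num) (by
    intro i hi
    have hi' : (i:ℝ) + 1 ≤ D := by
      have : i + 1 ≤ D := by simpa using hi
      exact_mod_cast this
    have hi0 : (0:ℝ) < (i:ℝ)+1 := by positivity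
    have h1 := hbd (c * ((i:ℝ)+1)^2) (by positivity) (by
      rw [hc, div_mul_eq_mul_div, div_le_div_iff₀ (by positivity) (by norm_num)]
      nlinarith)
    rw [← heval, abs_mul, abs_of_pos (by positivity : 0 < ((i:ℝ)+1)^2)] at h1
    rw [le_div_iff₀ (by positivity)]; linarith)
  have h0 : h.eval 0 = c * k * (1 - 2 * G ∅) := by
    simp only [h, Polynomial.eval_finsetSum]
    have e1 : ∀ T ∈ S, (Polynomial.C (coeff G T * c ^ T.card) * Polynomial.X ^ (T.card - 1)).eval 0
        = if T.card = 1 then coeff G T * c else 0 := by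
      intro T hT
      have := (Finset.mem_filter.1 hT).2
      simp only [Polynomial.eval_mul, Polynomial.eval_C, Polynomial.eval_pow, Polynomial.eval_X]
      split_ifs with h1
      · simp [h1]
      · rw [zero_pow (by omega), mul_zero]
    rw [Finset.sum_congr rfl e1, ← Finset.sum_filter]
    have e2 : S.filter (fun T => T.card = 1) = Finset.univ.image (fun j : Fin k => ({j} : Finset (Fin k))) := by
      ext T
      simp only [S, Finset.mem_filter, Finset.mem_univ, true_and, Finset.mem_image, Finset.card_eq_one]
      constructor
      · rintro ⟨_, a, rfl⟩; exact ⟨a, rfl⟩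
      · rintro ⟨a, rfl⟩; simp [hD]
    rw [e2, Finset.sum_image (by intro a _ b _ hab; simpa using hab)]
    have e3 : ∀ j ∈ (Finset.univ : Finset (Fin k)), coeff G {j} * c = c * (1 - 2 * G ∅) := by
      intro j _
      rw [coeff_single]
      have := hj j
      rcases hG {j} with h | h <;> rcases hG ∅ with h' | h' <;> rw [h, h'] at this ⊢ <;>
        first | exact absurd rfl this | ring
    rw [Finset.sum_congr rfl e3]
    simp; ring
  have h1 : |h.eval 0| = c * k := by
    rw [h0, abs_mul, abs_of_nonneg (by positivity)]
    rcases hG ∅ with h | h <;> rw [h] <;> norm_num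
  rw [h1, hc, div_mul_eq_mul_div, div_le_iff₀ (by positivity)] at hl
  have : (k:ℝ) ≤ 32 * D^2 := by linarith
  exact_mod_cast this

/-- monotone block sensitivity bound -/
lemma mbs_bound {n k D : ℕ} (hD : 1 ≤ D) (f : Finset (Fin n) → ℝ) (hf : ∀ x, f x = 0 ∨ f x = 1)
    (hs : sparsity f ≤ 2 ^ D) (z : Finset (Fin n)) (w : Fin k → Finset (Fin n))
    (hw : ∀ i j, i ≠ j → Disjoint (w i) (w j)) (hne : ∀ j, f (z ∪ w j) ≠ f z) :
    k ≤ 32 * D ^ 2 := by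
  let φ : Finset (Fin k) → Finset (Fin n) := fun y => z ∪ y.biUnion w
  refine sens_bound hD (fun y => f (φ y)) (fun x => hf _) (le_trans ?_ hs) ?_
  · refine spar_merge f φ (fun s => Finset.univ.filter fun j => ((s \ z) ∩ w j).Nonempty)
      (fun s => s ⊆ φ Finset.univ) ?_
    intro s y
    constructor
    · intro h
      refine ⟨h.trans ?_, ?_⟩
      · exact Finset.union_subset_union le_rfl (Finset.biUnion_subset_biUnion_of_subset_left _ (Finset.subset_univ _))
      · intro j hj
        simp only [Finset.mem_filter, Finset.mem_univ, true_and] at hj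
        obtain ⟨i, hi⟩ := hj
        simp only [Finset.mem_inter, Finset.mem_sdiff] at hi
        have := h hi.1.1
        simp only [φ, Finset.mem_union, Finset.mem_biUnion] at this
        rcases this with h1 | ⟨j', hj', hi'⟩
        · exact absurd h1 hi.1.2
        · by_cases hjj : j = j'
          · rwa [hjj]
          · exact absurd hi' (Finset.disjoint_left.1 (hw j j' hjj) hi.2)
    · rintro ⟨h1, h2⟩ i hi
      have := h1 hi
      simp only [φ, Finset.mem_union, Finset.mem_biUnion] at this ⊢
      by_cases hz : i ∈ z
      · exact Or.inl hz
      rcases this with h | ⟨j, -, hj⟩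
      · exact Or.inl h
      · refine Or.inr ⟨j, h2 ?_, hj⟩
        simp only [Finset.mem_filter, Finset.mem_univ, true_and]
        exact ⟨i, by simp [hi, hz, hj]⟩
  · intro j
    simpa [φ] using hne j

lemma mean_prod {m : ℕ} {Ω : Type} [Fintype Ω] (p : Ω → ℝ) (hp : ∑ a, p a = 1)
    (A : Finset (Fin m)) (g : Fin m → Ω → ℝ) :
    ∑ ω : Fin m → Ω, (∏ j, p (ω j)) * ∏ j ∈ A, g j (ω j) = ∏ j ∈ A, ∑ a, p a * g j a := by
  classical
  have h := Finset.prod_univ_sum (fun _ : Fin m => (Finset.univ : Finset Ω))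
    (fun j a => p a * (if j ∈ A then g j a else 1))
  rw [Fintype.piFinset_univ] at h
  have h1 : ∀ j : Fin m, ∑ a, p a * (if j ∈ A then g j a else 1)
      = if j ∈ A then ∑ a, p a * g j a else 1 := by
    intro j
    split_ifs with hj
    · rfl
    · simp [hp]
  rw [Finset.prod_congr rfl fun j _ => h1 j, Finset.prod_ite_mem, Finset.univ_inter] at h
  rw [h]
  refine Finset.sum_congr rfl fun ω _ => ?_
  rw [Finset.prod_mul_distrib, Finset.prod_ite_mem, Finset.univ_inter]

open Classical in
/-- every fractional packing has value at most `1/α` -/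
def PP {n : ℕ} (f : Finset (Fin n) → ℝ) (α : ℝ) : Prop :=
  ∀ (z : Finset (Fin n)) (Ω : Type) [Fintype Ω] (p : Ω → ℝ) (U : Ω → Finset (Fin n)) (c : ℝ),
    (∀ ω, 0 ≤ p ω) → 0 ≤ c → (∀ x, ∑ ω, p ω * (if x ∈ U ω then 1 else 0) ≤ c) →
    α * ∑ ω, p ω * (if f (z ∪ U ω) ≠ f z then 1 else 0) ≤ c

open Classical in
/-- elements covered at least twice by indices outside `Ex` -/
noncomputable def uu {n m : ℕ} {Ω : Type} (U : Ω → Finset (Fin n)) (Ex : Finset (Fin m)) (ω : Fin m → Ω) :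
    Finset (Fin n) :=
  Finset.univ.filter fun x => ∃ j l, j ≠ l ∧ j ∉ Ex ∧ l ∉ Ex ∧ x ∈ U (ω j) ∧ x ∈ U (ω l)

open Classical in
lemma marg_uu {n m : ℕ} {Ω : Type} [Fintype Ω] (p : Ω → ℝ) (hp : ∑ a, p a = 1) (hp0 : ∀ a, 0 ≤ p a)
    (U : Ω → Finset (Fin n)) (b : ℝ)
    (hb : ∀ x, ∑ ω, p ω * (if x ∈ U ω then 1 else 0) ≤ b)
    (Ex : Finset (Fin m)) (g : Fin m → Ω → ℝ) (hg : ∀ j a, 0 ≤ g j a) (x : Fin n) :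
    ∑ ω : Fin m → Ω, ((∏ j, p (ω j)) * ∏ j ∈ Ex, g j (ω j)) * (if x ∈ uu U Ex ω then 1 else 0)
      ≤ (m:ℝ)^2 * b^2 * ∏ j ∈ Ex, ∑ a, p a * g j a := by
  have hE0 : 0 ≤ ∏ j ∈ Ex, ∑ a, p a * g j a :=
    Finset.prod_nonneg fun j _ => Finset.sum_nonneg fun a _ => mul_nonneg (hp0 a) (hg j a)
  have hm0 : 0 ≤ ∑ ω, p ω * (if x ∈ U ω then (1:ℝ) else 0) :=
    Finset.sum_nonneg fun a _ => mul_nonneg (hp0 a) (by split_ifs <;> norm_num)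
  have hw0 : ∀ ω : Fin m → Ω, 0 ≤ (∏ j, p (ω j)) * ∏ j ∈ Ex, g j (ω j) := fun ω =>
    mul_nonneg (Finset.prod_nonneg fun j _ => hp0 _) (Finset.prod_nonneg fun j _ => hg _ _)
  let Q : Finset (Fin m × Fin m) := Finset.univ.filter fun jl => jl.1 ≠ jl.2 ∧ jl.1 ∉ Ex ∧ jl.2 ∉ Ex
  let g' : Fin m → Ω → ℝ := fun j a => if j ∈ Ex then g j a else if x ∈ U a then 1 else 0
  have hg' : ∀ j a, 0 ≤ g' j a := by
    intro j a
    simp only [g']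
    split_ifs
    · exact hg j a
    · norm_num
    · norm_num
  have hQ : ∀ jl ∈ Q, ∀ (F : Fin m → ℝ), ∏ j ∈ insert jl.1 (insert jl.2 Ex), F j
      = F jl.1 * (F jl.2 * ∏ j ∈ Ex, F j) := by
    intro jl hjl F
    have := (Finset.mem_filter.1 hjl).2
    rw [Finset.prod_insert, Finset.prod_insert this.2.2]
    simp only [Finset.mem_insert, not_or]
    exact ⟨this.1, this.2.1⟩
  have hEx : ∀ ω : Fin m → Ω, ∏ j ∈ Ex, g' j (ω j) = ∏ j ∈ Ex, g j (ω j) := fun ω =>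
    Finset.prod_congr rfl fun j hj => by simp [g', hj]
  calc _ ≤ ∑ ω : Fin m → Ω, ∑ jl ∈ Q, (∏ j, p (ω j)) *
            ∏ j ∈ insert jl.1 (insert jl.2 Ex), g' j (ω j) := by
        refine Finset.sum_le_sum fun ω _ => ?_
        have hnn : ∀ jl ∈ Q, 0 ≤ (∏ j, p (ω j)) *
            ∏ j ∈ insert jl.1 (insert jl.2 Ex), g' j (ω j) := fun jl _ =>
          mul_nonneg (Finset.prod_nonneg fun j _ => hp0 _) (Finset.prod_nonneg fun j _ => hg' _ _)
        split_ifs with hx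
        · simp only [uu, Finset.mem_filter, Finset.mem_univ, true_and] at hx
          obtain ⟨j, l, hjl, hj, hl, hxj, hxl⟩ := hx
          have hmem : (j, l) ∈ Q := by simp [Q, hjl, hj, hl]
          refine le_trans (le_of_eq ?_) (Finset.single_le_sum hnn hmem)
          rw [hQ _ hmem, hEx]
          simp [g', hj, hl, hxj, hxl]
        · rw [mul_zero]
          exact Finset.sum_nonneg hnn
    _ = ∑ jl ∈ Q, ∏ j ∈ insert jl.1 (insert jl.2 Ex), ∑ a, p a * g' j a := by
        rw [Finset.sum_comm]
        exact Finset.sum_congr rfl fun jl _ => mean_prod p hp _ g'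
    _ ≤ ∑ jl ∈ Q, b^2 * ∏ j ∈ Ex, ∑ a, p a * g j a := by
        refine Finset.sum_le_sum fun jl hjl => ?_
        rw [hQ jl hjl (fun j => ∑ a, p a * g' j a)]
        have := (Finset.mem_filter.1 hjl).2
        have e1 : ∏ j ∈ Ex, ∑ a, p a * g' j a = ∏ j ∈ Ex, ∑ a, p a * g j a :=
          Finset.prod_congr rfl fun j hj => by simp [g', hj]
        rw [e1, ← mul_assoc]
        refine mul_le_mul_of_nonneg_right ?_ hE0
        simp only [g', if_neg this.2.1, if_neg this.2.2]
        rw [sq]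
        exact mul_le_mul (hb x) (hb x) hm0 (hm0.trans (hb x))
    _ ≤ _ := by
        rw [Finset.sum_const, nsmul_eq_mul, mul_assoc]
        refine mul_le_mul_of_nonneg_right ?_ (mul_nonneg (sq_nonneg b) hE0)
        have : Q.card ≤ m^2 := by
          refine (Finset.card_le_univ _).trans ?_
          simp [sq]
        exact_mod_cast this

open Classical in
lemma step_core {n : ℕ} (f : Finset (Fin n) → ℝ) (hf : ∀ x, f x = 0 ∨ f x = 1) (B : ℕ)
    (hB : ∀ (k : ℕ) (z : Finset (Fin n)) (w : Fin k → Finset (Fin n)),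
      (∀ i j, i ≠ j → Disjoint (w i) (w j)) → (∀ j, f (z ∪ w j) ≠ f z) → k ≤ B)
    (m : ℕ) (hm : 2 * B ≤ m) (hm0 : 0 < m)
    (α : ℝ) (hα : 0 < α) (hαm : 16 * (m:ℝ)^2 * α < 1) (hP : PP f α)
    (z : Finset (Fin n)) (Ω : Type) [Fintype Ω] (p : Ω → ℝ) (hp : ∑ a, p a = 1) (hp0 : ∀ a, 0 ≤ p a)
    (U : Ω → Finset (Fin n)) (hU : ∀ a, p a ≠ 0 → f (z ∪ U a) ≠ f z)
    (hb : ∀ x, ∑ ω, p ω * (if x ∈ U ω then 1 else 0) ≤ 2 * α) : False := by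
  have hmR : (0:ℝ) < m := by exact_mod_cast hm0
  let q : (Fin m → Ω) → ℝ := fun ω => ∏ j, p (ω j)
  have hq0 : ∀ ω, 0 ≤ q ω := fun ω => Finset.prod_nonneg fun j _ => hp0 _
  have hq1 : ∑ ω, q ω = 1 := by
    have := mean_prod (m := m) p hp ∅ (fun _ _ => 1)
    simpa [q] using this
  set K : ℝ := (m:ℝ)^2 * (2*α)^2 with hK
  have hK0 : 0 ≤ K := by positivity
  -- the event that `u` changes the value
  have h1 : α * ∑ ω, q ω * (if f (z ∪ uu U ∅ ω) ≠ f z then 1 else 0) ≤ K := by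
    refine hP z (Fin m → Ω) q (uu U ∅) K hq0 hK0 fun x => ?_
    have := marg_uu (m := m) p hp hp0 U (2*α) hb ∅ (fun _ _ => 1) (fun _ _ => zero_le_one) x
    simpa [q, hK] using this
  have h2 : ∀ i, α * ∑ ω, q ω * (if f (z ∪ U (ω i) ∪ uu U ∅ ω) = f z then 1 else 0) ≤ K := by
    intro i
    have h3 : ∀ a, α * ∑ ω : Fin m → Ω, (q ω * if ω i = a then 1 else 0) *
        (if f ((z ∪ U a) ∪ uu U {i} ω) ≠ f (z ∪ U a) then 1 else 0) ≤ K * p a := by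
      intro a
      refine hP (z ∪ U a) (Fin m → Ω) _ (uu U {i}) (K * p a)
        (fun ω => mul_nonneg (hq0 ω) (by split_ifs <;> norm_num)) (mul_nonneg hK0 (hp0 a)) fun x => ?_
      have := marg_uu (m := m) p hp hp0 U (2*α) hb {i} (fun _ b => if b = a then 1 else 0)
        (fun _ _ => by split_ifs <;> norm_num) x
      simp only [Finset.prod_singleton] at this
      refine this.trans (le_of_eq ?_)
      simp [hK]
    have h4 := Finset.sum_le_sum fun a (_ : a ∈ (Finset.univ : Finset Ω)) => h3 a
    rw [← Finset.mul_sum, ← Finset.mul_sum, hp, mul_one, Finset.sum_comm] at h4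
    refine le_trans ?_ h4
    refine mul_le_mul_of_nonneg_left ?_ hα.le
    refine Finset.sum_le_sum fun ω _ => ?_
    have e : ∑ a, (q ω * if ω i = a then 1 else 0) *
        (if f ((z ∪ U a) ∪ uu U {i} ω) ≠ f (z ∪ U a) then (1:ℝ) else 0)
        = q ω * (if f ((z ∪ U (ω i)) ∪ uu U {i} ω) ≠ f (z ∪ U (ω i)) then (1:ℝ) else 0) := by
      rw [Finset.sum_eq_single (ω i)]
      · simp
      · intro a _ ha
        simp [ha.symm]
      · simp
    rw [e]
    by_cases hq : q ω = 0
    · simp [hq]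
    refine mul_le_mul_of_nonneg_left ?_ (hq0 ω)
    have hpi : p (ω i) ≠ 0 := fun h => hq (Finset.prod_eq_zero (Finset.mem_univ i) h)
    have hne := hU _ hpi
    have hset : z ∪ U (ω i) ∪ uu U ∅ ω = z ∪ U (ω i) ∪ uu U {i} ω := by
      ext x
      simp only [uu, Finset.mem_union, Finset.mem_filter, Finset.mem_univ, true_and,
        Finset.notMem_empty, not_false_eq_true, Finset.mem_singleton]
      constructor
      · rintro ((h | h) | ⟨j, l, hjl, hl⟩)
        · exact Or.inl (Or.inl h)
        · exact Or.inl (Or.inr h)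
        · by_cases hji : j = i
          · subst hji; exact Or.inl (Or.inr hl.1)
          by_cases hli : l = i
          · subst hli; exact Or.inl (Or.inr hl.2)
          exact Or.inr ⟨j, l, hjl, hji, hli, hl⟩
      · rintro ((h | h) | ⟨j, l, hjl, hj, hl, h⟩)
        · exact Or.inl (Or.inl h)
        · exact Or.inl (Or.inr h)
        · exact Or.inr ⟨j, l, hjl, h⟩
    rw [hset]
    split_ifs with c1 c2 c2
    · exact le_rfl
    · exact absurd (not_not.1 c2) (fun h => hne (h.symm.trans c1))
    · norm_num
    · norm_num
  -- combine
  let X : (Fin m → Ω) → ℝ := fun ω => m * (if f (z ∪ uu U ∅ ω) ≠ f z then 1 else 0)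
    + ∑ i, (if f (z ∪ U (ω i) ∪ uu U ∅ ω) = f z then 1 else 0)
  have hX : α * ∑ ω, q ω * X ω ≤ 2 * m * K := by
    have e : ∑ ω, q ω * X ω = m * ∑ ω, q ω * (if f (z ∪ uu U ∅ ω) ≠ f z then 1 else 0)
        + ∑ i, ∑ ω, q ω * (if f (z ∪ U (ω i) ∪ uu U ∅ ω) = f z then 1 else 0) := by
      rw [Finset.sum_comm, Finset.mul_sum, ← Finset.sum_add_distrib]
      refine Finset.sum_congr rfl fun ω _ => ?_
      simp only [X]
      rw [mul_add, Finset.mul_sum]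
      ring
    rw [e, mul_add, Finset.mul_sum (s := (Finset.univ : Finset (Fin m)))]
    have h5 := Finset.sum_le_sum fun i (_ : i ∈ (Finset.univ : Finset (Fin m))) => h2 i
    rw [Finset.sum_const, Finset.card_univ, Fintype.card_fin, nsmul_eq_mul] at h5
    have h6 := mul_le_mul_of_nonneg_left h1 hmR.le
    linarith
  have hX2 : ∑ ω, q ω * X ω < ∑ ω, q ω * ((m:ℝ) / 2) := by
    rw [← Finset.sum_mul, hq1, one_mul]
    refine lt_of_mul_lt_mul_left (hX.trans_lt ?_) hα.le
    have : 0 < α * m * (1 - 16 * (m:ℝ)^2 * α) := mul_pos (by positivity) (by linarith)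
    rw [hK]; nlinarith
  obtain ⟨ω, -, hω⟩ := Finset.exists_lt_of_sum_lt hX2
  have hXω : X ω < (m:ℝ)/2 := lt_of_mul_lt_mul_left hω (hq0 ω)
  have hsum0 : (0:ℝ) ≤ ∑ i, (if f (z ∪ U (ω i) ∪ uu U ∅ ω) = f z then (1:ℝ) else 0) :=
    Finset.sum_nonneg fun i _ => by split_ifs <;> norm_num
  have hu : f (z ∪ uu U ∅ ω) = f z := by
    by_contra hcon
    simp only [X, ne_eq, hcon, not_false_eq_true, if_true, mul_one] at hXω
    linarith
  let I : Finset (Fin m) := Finset.univ.filter fun i => ¬ f (z ∪ U (ω i) ∪ uu U ∅ ω) = f z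
  have hI : I.card ≤ B := by
    let e := I.equivFin.symm
    refine hB I.card (z ∪ uu U ∅ ω) (fun k => U (ω (e k)) \ uu U ∅ ω) ?_ ?_
    · intro k l hkl
      rw [Finset.disjoint_left]
      intro x hx hx'
      rw [Finset.mem_sdiff] at hx hx'
      refine hx.2 ?_
      simp only [uu, Finset.mem_filter, Finset.mem_univ, true_and]
      refine ⟨e k, e l, ?_, by simp, by simp, hx.1, hx'.1⟩
      intro h
      exact hkl (e.injective (Subtype.ext h))
    · intro k
      have hk := (Finset.mem_filter.1 (e k).2).2
      have hs : z ∪ uu U ∅ ω ∪ U (ω (e k)) \ uu U ∅ ω = z ∪ U (ω (e k)) ∪ uu U ∅ ω := by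
        ext x
        simp only [Finset.mem_union, Finset.mem_sdiff]
        tauto
      simp only [hu, hs]
      exact hk
  have hcard : (I.card : ℝ) + ∑ i, (if f (z ∪ U (ω i) ∪ uu U ∅ ω) = f z then (1:ℝ) else 0) = m := by
    rw [Finset.sum_boole, ← Nat.cast_add, add_comm, Finset.card_filter_add_card_filter_not]
    simp
  simp only [X, hu, ne_eq, not_true_eq_false, if_false, mul_zero, zero_add] at hXω
  have hI' : (I.card : ℝ) ≤ B := by exact_mod_cast hI
  have hm' : 2 * (B:ℝ) ≤ m := by exact_mod_cast hm
  linarith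

lemma PP_step {n : ℕ} (f : Finset (Fin n) → ℝ) (hf : ∀ x, f x = 0 ∨ f x = 1) (B : ℕ)
    (hB : ∀ (k : ℕ) (z : Finset (Fin n)) (w : Fin k → Finset (Fin n)),
      (∀ i j, i ≠ j → Disjoint (w i) (w j)) → (∀ j, f (z ∪ w j) ≠ f z) → k ≤ B)
    (m : ℕ) (hm : 2 * B ≤ m) (hm0 : 0 < m)
    (α : ℝ) (hα : 0 < α) (hαm : 16 * (m:ℝ)^2 * α < 1) (hP : PP f α) : PP f (2 * α) := by
  classical
  intro z Ω _ p U c hp0 hc hmarg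
  by_contra hcon
  push Not at hcon
  set S := ∑ ω, p ω * (if f (z ∪ U ω) ≠ f z then (1:ℝ) else 0) with hS
  have hS0 : 0 < S := by
    by_contra h
    nlinarith
  refine step_core f hf B hB m hm hm0 α hα hαm hP z Ω
    (fun ω => p ω * (if f (z ∪ U ω) ≠ f z then (1:ℝ) else 0) / S) ?_ ?_ U ?_ ?_
  · rw [← Finset.sum_div, ← hS, div_self hS0.ne']
  · intro a
    refine div_nonneg (mul_nonneg (hp0 a) ?_) hS0.le
    split_ifs <;> norm_num
  · intro a ha h
    simp [h] at ha
  · intro x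
    have : ∑ ω, p ω * (if f (z ∪ U ω) ≠ f z then (1:ℝ) else 0) / S * (if x ∈ U ω then 1 else 0)
        ≤ (∑ ω, p ω * (if x ∈ U ω then 1 else 0)) / S := by
      rw [Finset.sum_div]
      refine Finset.sum_le_sum fun ω _ => ?_
      rw [div_mul_eq_mul_div]
      refine div_le_div_of_nonneg_right ?_ hS0.le
      refine mul_le_mul_of_nonneg_right ?_ (by split_ifs <;> norm_num)
      have := hp0 ω
      split_ifs <;> simp [this]
    refine this.trans ?_
    rw [div_le_iff₀ hS0]
    exact (hmarg x).trans hcon.le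

lemma PP_anti {n : ℕ} (f : Finset (Fin n) → ℝ) {α β : ℝ} (h : β ≤ α) (hP : PP f α) : PP f β := by
  intro z Ω _ p U c hp0 hc hmarg
  refine le_trans (mul_le_mul_of_nonneg_right h ?_) (hP z Ω p U c hp0 hc hmarg)
  exact Finset.sum_nonneg fun ω _ => mul_nonneg (hp0 ω) (by split_ifs <;> norm_num)

lemma PP_init {n : ℕ} (f : Finset (Fin n) → ℝ) : PP f (1 / (n+1)) := by
  classical
  intro z Ω _ p U c hp0 hc hmarg
  rw [div_mul_eq_mul_div, one_mul, div_le_iff₀ (by positivity)]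
  calc _ ≤ ∑ ω, ∑ x, p ω * (if x ∈ U ω then (1:ℝ) else 0) := by
        refine Finset.sum_le_sum fun ω _ => ?_
        rw [← Finset.mul_sum]
        refine mul_le_mul_of_nonneg_left ?_ (hp0 ω)
        rw [Finset.sum_boole]
        split_ifs with h
        · have : (U ω).Nonempty := by
            rw [Finset.nonempty_iff_ne_empty]
            intro h'
            simp [h'] at h
          have := this.card_pos
          simp
          omega
        · positivity
    _ ≤ ∑ x : Fin n, c := by
        rw [Finset.sum_comm]
        exact Finset.sum_le_sum fun x _ => hmarg x
    _ ≤ c * (n + 1) := by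
        simp; linarith

lemma PP_final {n : ℕ} (f : Finset (Fin n) → ℝ) (hf : ∀ x, f x = 0 ∨ f x = 1) (B : ℕ)
    (hB : ∀ (k : ℕ) (z : Finset (Fin n)) (w : Fin k → Finset (Fin n)),
      (∀ i j, i ≠ j → Disjoint (w i) (w j)) → (∀ j, f (z ∪ w j) ≠ f z) → k ≤ B)
    (m : ℕ) (hm : 2 * B ≤ m) (hm0 : 0 < m) : PP f (1 / (16 * (m:ℝ)^2)) := by
  have hmR : (0:ℝ) < m := by exact_mod_cast hm0
  set β : ℝ := 1 / (16 * (m:ℝ)^2) with hβ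
  have hβ0 : 0 < β := by positivity
  have hβ1 : 16 * (m:ℝ)^2 * β = 1 := by rw [hβ]; field_simp
  have down : ∀ j : ℕ, PP f (β / 2^j) → PP f β := by
    intro j
    induction j with
    | zero => intro h; simpa using h
    | succ j ih =>
      intro h
      apply ih
      have := PP_step f hf B hB m hm hm0 (β / 2^(j+1)) (by positivity) (by
        rw [← mul_div_assoc, hβ1, div_lt_one (by positivity)]
        exact one_lt_pow₀ (by norm_num) (by omega)) h
      convert this using 1
      rw [pow_succ]; field_simp
  obtain ⟨j, hj⟩ := pow_unbounded_of_one_lt (β * (n+1)) (one_lt_two : (1:ℝ) < 2)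
  refine down j (PP_anti f ?_ (PP_init f))
  rw [div_le_div_iff₀ (by positivity) (by positivity)]
  linarith

lemma greedy {n : ℕ} (f : Finset (Fin n) → ℝ) (β : ℝ) (hβ0 : 0 < β) (hβ1 : β ≤ 1) (hP : PP f β)
    (z : Finset (Fin n)) : ∀ (t : ℕ) (M : Finset (Finset (Fin n))),
      (∀ w ∈ M, f (z ∪ w) ≠ f z) → (M.card : ℝ) * (1 - β)^t < 1 →
      ∃ H : Finset (Fin n), H.card ≤ t ∧ ∀ w ∈ M, (H ∩ w).Nonempty := by
  classical
  intro t
  induction t with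
  | zero =>
    intro M hM hc
    rw [pow_zero, mul_one] at hc
    have : M.card = 0 := by
      have : M.card < 1 := by exact_mod_cast hc
      omega
    rw [Finset.card_eq_zero] at this
    exact ⟨∅, by simp, by simp [this]⟩
  | succ t ih =>
    intro M hM hc
    rcases M.eq_empty_or_nonempty with rfl | hne
    · exact ⟨∅, by simp, by simp⟩
    have hMpos : (0:ℝ) < M.card := by exact_mod_cast hne.card_pos
    have hex : ∃ i, β * M.card ≤ ((M.filter (fun w => i ∈ w)).card : ℝ) := by
      obtain ⟨w, hw⟩ := hne
      have hwne : w.Nonempty := by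
        rw [Finset.nonempty_iff_ne_empty]
        rintro rfl
        exact hM _ hw (by simp)
      obtain ⟨i0, _⟩ := hwne
      obtain ⟨i, -, hi⟩ := Finset.exists_max_image (Finset.univ : Finset (Fin n))
        (fun i => (M.filter (fun w => i ∈ w)).card) ⟨i0, Finset.mem_univ _⟩
      refine ⟨i, ?_⟩
      have := hP z (Finset (Fin n)) (fun w => if w ∈ M then 1 else 0) id
        ((M.filter (fun w => i ∈ w)).card) (fun w => by split_ifs <;> norm_num) (by positivity) (by
          intro x
          have h1 : ∑ w : Finset (Fin n), (if w ∈ M then (1:ℝ) else 0) * (if x ∈ id w then 1 else 0)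
              = ((M.filter (fun w => x ∈ w)).card : ℝ) := by
            rw [Finset.card_filter]
            push_cast
            simp only [ite_mul, one_mul, zero_mul, Finset.sum_ite_mem, Finset.univ_inter, id]
          rw [h1]
          exact_mod_cast hi x (Finset.mem_univ x))
      refine le_trans (le_of_eq ?_) this
      congr 1
      simp only [ite_mul, one_mul, zero_mul, Finset.sum_ite_mem, Finset.univ_inter, id]
      rw [Finset.sum_congr rfl (fun w hw => if_pos (hM w hw))]
      simp
    obtain ⟨i, hi⟩ := hex
    have hsplit : ((M.filter (fun w => i ∈ w)).card : ℝ) + ((M.filter (fun w => i ∉ w)).card : ℝ) = M.card := by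
      exact_mod_cast Finset.card_filter_add_card_filter_not (s := M) (fun w => i ∈ w)
    obtain ⟨H, hH, hH'⟩ := ih (M.filter (fun w => i ∉ w)) (fun w hw => hM w (Finset.mem_filter.1 hw).1) (by
      refine lt_of_le_of_lt ?_ hc
      rw [pow_succ', ← mul_assoc]
      refine mul_le_mul_of_nonneg_right ?_ (pow_nonneg (by linarith) _)
      linarith)
    refine ⟨insert i H, (Finset.card_insert_le _ _).trans (by omega), ?_⟩
    intro w hw
    by_cases hiw : i ∈ w
    · exact ⟨i, by simp [hiw]⟩
    · obtain ⟨x, hx⟩ := hH' w (Finset.mem_filter.2 ⟨hw, hiw⟩)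
      rw [Finset.mem_inter] at hx
      exact ⟨x, by simp [hx.1, hx.2]⟩

lemma min_sets {n : ℕ} (f : Finset (Fin n) → ℝ) (z : Finset (Fin n)) :
    ∃ M : Finset (Finset (Fin n)), M.card ≤ sparsity f ∧ (∀ w ∈ M, f (z ∪ w) ≠ f z) ∧
      ∀ w, f (z ∪ w) ≠ f z → ∃ w' ∈ M, w' ⊆ w := by
  classical
  let G : Finset (Fin n) → ℝ := fun y => f (z ∪ y)
  have hsub := supp_merge f (fun y => z ∪ y) (fun s => s \ z) (fun _ => True) (by
    intro s y
    simp only [true_and]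
    exact (sdiff_le_iff (a := s) (b := z) (c := y)).symm)
  let N : Finset (Finset (Fin n)) := Finset.univ.filter fun T => coeff G T ≠ 0
  have hN : N.card ≤ sparsity f := by
    have h1 : N.card = {T | coeff G T ≠ 0}.ncard := by
      rw [Set.ncard_eq_toFinset_card']
      congr 1; ext; simp [N]
    rw [h1]
    exact (Set.ncard_le_ncard hsub (Set.toFinite _)).trans (Set.ncard_image_le (Set.toFinite _))
  refine ⟨N.filter fun w => f (z ∪ w) ≠ f z, (Finset.card_filter_le _ _).trans hN,
    fun w hw => (Finset.mem_filter.1 hw).2, ?_⟩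
  have hG0 : G ∅ = f z := by simp [G]
  intro w
  induction w using Finset.strongInduction with
  | H w ih =>
    intro hw
    by_cases hex : ∃ w' , w' ⊂ w ∧ f (z ∪ w') ≠ f z
    · obtain ⟨w', h1, h2⟩ := hex
      obtain ⟨w'', h3, h4⟩ := ih w' h1 h2
      exact ⟨w'', h3, h4.trans h1.1⟩
    · push Not at hex
      refine ⟨w, Finset.mem_filter.2 ⟨?_, hw⟩, le_rfl⟩
      simp only [N, Finset.mem_filter, Finset.mem_univ, true_and]
      have hwne : w.Nonempty := by
        rw [Finset.nonempty_iff_ne_empty]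
        rintro rfl
        exact hw (by simp)
      -- proper nonempty subsets have zero coefficient
      have hz : ∀ T, T ⊂ w → T ≠ ∅ → coeff G T = 0 := by
        intro T
        induction T using Finset.strongInduction with
        | H T ihT =>
          intro hT hT0
          have h1 := coeff_inv G T
          have h2 : ∑ s ∈ T.powerset, coeff G s = coeff G ∅ + coeff G T := by
            rw [← Finset.sum_pair (Ne.symm hT0)]
            symm
            refine Finset.sum_subset ?_ ?_
            · intro s; simp only [Finset.mem_insert, Finset.mem_singleton, Finset.mem_powerset]
              rintro (rfl | rfl) <;> simp
            · intro s hs hs'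
              simp only [Finset.mem_insert, Finset.mem_singleton, not_or, Finset.mem_powerset] at hs hs'
              have := hs.ssubset_of_ne hs'.2
              exact ihT s this (this.trans hT) hs'.1
          have h3 : G T = f z := hex T hT
          rw [h2, coeff_empty, hG0, h3] at h1
          linarith
      intro h0
      have h1 := coeff_inv G w
      have h2 : ∑ s ∈ w.powerset, coeff G s = coeff G ∅ := by
        rw [Finset.sum_eq_single ∅]
        · intro s hs hs0
          rw [Finset.mem_powerset] at hs
          by_cases hsw : s = w
          · rw [hsw, h0]
          · exact hz s (hs.ssubset_of_ne hsw) hs0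
        · simp
      rw [h2, coeff_empty, hG0] at h1
      exact hw h1.symm

/-- Log-rank theorem ingredient: `HSC(f) = O((log r)^5)` for boolean `f` of sparsity `r ≥ 2`:
for every `z`, the family `W(f,z)` has a hitting set of size `≤ C·(log₂ r)^5`. -/
theorem stmt1 :
    ∃ C : ℝ, 0 < C ∧
      ∀ (n : ℕ) (f : Finset (Fin n) → ℝ),
        (∀ x, f x = 0 ∨ f x = 1) →
        2 ≤ sparsity f →
        ∀ z : Finset (Fin n),
          ∃ H : Finset (Fin n),
            (∀ w ∈ W f z, (H ∩ w).Nonempty) ∧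
            (H.card : ℝ) ≤ C * (Real.logb 2 (sparsity f)) ^ 5 := by
  refine ⟨65536 * 32, by norm_num, ?_⟩
  intro n f hf hr z
  set r := sparsity f with hrdef
  set L := Real.logb 2 r with hL
  have hr' : (2:ℝ) ≤ r := by exact_mod_cast hr
  have hL1 : 1 ≤ L := by
    rw [hL, Real.le_logb_iff_rpow_le (by norm_num) (by linarith)]
    simpa using hr'
  let D := ⌈L⌉₊
  have hDL : L ≤ D := Nat.le_ceil L
  have hD1 : 1 ≤ D := by
    have : (1:ℝ) ≤ D := hL1.trans hDL
    exact_mod_cast this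
  have hD2 : (D:ℝ) ≤ 2 * L := by
    have := Nat.ceil_lt_add_one (show 0 ≤ L by linarith)
    have h2 : (D:ℝ) < L + 1 := this
    linarith
  have hrD : (r:ℝ) ≤ 2 ^ D := by
    rw [← Real.rpow_natCast]
    rw [hL, Real.logb_le_iff_le_rpow (by norm_num) (by linarith)] at hDL
    exact hDL
  have hrD' : r ≤ 2 ^ D := by exact_mod_cast hrD
  have hPP := PP_final f hf (32 * D^2)
    (fun k z w h1 h2 => mbs_bound hD1 f hf hrD' z w h1 h2) (64 * D^2) (by omega) (by positivity)
  set β : ℝ := 1 / (16 * ((64 * D^2 : ℕ):ℝ)^2) with hβ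
  have hDR : (1:ℝ) ≤ D := by exact_mod_cast hD1
  have hβ0 : 0 < β := by positivity
  have hβ1 : β ≤ 1 := by
    rw [hβ, div_le_one (by positivity)]
    push_cast
    have : (1:ℝ) ≤ D^2 := one_le_pow₀ hDR
    nlinarith
  obtain ⟨M, hM1, hM2, hM3⟩ := min_sets f z
  obtain ⟨H, hH1, hH2⟩ := greedy f β hβ0 hβ1 hPP z (65536 * D^5) M hM2 (by
    have e1 : (1 - β)^(65536 * D^5) ≤ Real.exp (-1) ^ D := by
      calc (1 - β)^(65536 * D^5) ≤ (Real.exp (-β))^(65536 * D^5) := by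
            refine pow_le_pow_left₀ (by linarith) ?_ _
            have := Real.add_one_le_exp (-β)
            linarith
        _ = Real.exp (-1) ^ D := by
            rw [← Real.exp_nat_mul, ← Real.exp_nat_mul]
            congr 1
            rw [hβ]; push_cast
            field_simp
            norm_num
    have e2 : (M.card : ℝ) ≤ 2 ^ D := by
      refine le_trans ?_ hrD
      exact_mod_cast hM1
    calc (M.card : ℝ) * (1 - β)^(65536 * D^5) ≤ 2 ^ D * Real.exp (-1) ^ D :=
          mul_le_mul e2 e1 (pow_nonneg (by linarith) _) (by positivity)
      _ = (2 * Real.exp (-1)) ^ D := by rw [mul_pow]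
      _ < 1 := by
          refine pow_lt_one₀ (by positivity) ?_ (by omega)
          have h1 := Real.exp_one_gt_d9
          rw [Real.exp_neg, ← div_eq_mul_inv, div_lt_one (Real.exp_pos 1)]
          linarith)
  refine ⟨H, ?_, ?_⟩
  · intro w hw
    obtain ⟨w', hw', hsub⟩ := hM3 w hw.2
    obtain ⟨x, hx⟩ := hH2 w' hw'
    rw [Finset.mem_inter] at hx
    exact ⟨x, Finset.mem_inter.2 ⟨hx.1, hsub hx.2⟩⟩
  · have h1 : (H.card : ℝ) ≤ 65536 * (D:ℝ)^5 := by exact_mod_cast hH1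
    have h2 : (D:ℝ)^5 ≤ (2 * L)^5 := pow_le_pow_left₀ (by positivity) hD2 5
    have h3 : (2 * L)^5 = 32 * L^5 := by ring
    nlinarith
end

section
/- There is an absolute constant C > 0 such that the following holds. Let f : {0,1}^n → ℝ be a function (multilinear polynomial) with sparsity spar(f) = r ≥ 2 and monotone block sensitivity MBS(f) ≤ m. Then for every z ∈ {0,1}^n, the family W(f,z) = {w ⊆ [n]∖z : f(z ∨ w) ≠ f(z)} has a hitting set of size at most C·m²·log₂ r; that is, HSC(f) = O(m²·log r). -/
open Finset in
lemma alt_lem {n : ℕ} (hn : 0 < n) (F : Finset (Finset (Fin n))) (c : ℝ)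
    (h : ¬ ∃ P : Fin n → ℝ, (∀ i, 0 ≤ P i) ∧ ∑ i, P i = 1 ∧ ∀ w ∈ F, c ≤ ∑ i ∈ w, P i) :
    ∃ D : Finset (Fin n) → ℝ, (∀ w, 0 ≤ D w) ∧ ∑ w, D w = 1 ∧ (∀ w, D w ≠ 0 → w ∈ F) ∧
      ∀ i, ∑ w, D w * (if i ∈ w then 1 else 0) < c := by
  classical
  let L : (Fin n → ℝ) →ₗ[ℝ] (Finset (Fin n) → ℝ) :=
    { toFun := fun P w => ∑ i ∈ w, P i
      map_add' := by intro a b; ext w; simp [Finset.sum_add_distrib]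
      map_smul' := by intro a b; ext w; simp [Finset.mul_sum] }
  have hA1 : Convex ℝ (L '' stdSimplex ℝ (Fin n)) := (convex_stdSimplex ℝ (Fin n)).linear_image L
  have hA2 : IsCompact (L '' stdSimplex ℝ (Fin n)) :=
    (isCompact_stdSimplex ℝ (Fin n)).image L.continuous_of_finiteDimensional
  let B : Set (Finset (Fin n) → ℝ) := {v | ∀ w ∈ F, c ≤ v w}
  have hB1 : Convex ℝ B := by
    intro x hx y hy a b ha hb hab w hw
    have h1 := hx w hw
    have h2 := hy w hw
    simp only [Pi.add_apply, Pi.smul_apply, smul_eq_mul]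
    calc c = a * c + b * c := by rw [← add_mul, hab, one_mul]
      _ ≤ _ := by gcongr
  have hB2 : IsClosed B := by
    have : B = ⋂ w ∈ F, {v | c ≤ v w} := by ext v; simp [B]
    rw [this]
    exact isClosed_biInter fun w _ => isClosed_le continuous_const (continuous_apply w)
  have hd : Disjoint (L '' stdSimplex ℝ (Fin n)) B := by
    rw [Set.disjoint_left]
    rintro _ ⟨P, hP, rfl⟩ hB
    exact h ⟨P, hP.1, hP.2, hB⟩
  obtain ⟨g, s, t, h1, h2, h3⟩ := geometric_hahn_banach_compact_closed hA1 hA2 hB1 hB2 hd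
  let e : Finset (Fin n) → ℝ := fun w => g (Pi.single w 1)
  have hg : ∀ v, g v = ∑ w, e w * v w := by
    intro v
    conv_lhs => rw [← Finset.univ_sum_single v]
    rw [map_sum]
    refine Finset.sum_congr rfl fun w _ => ?_
    have : (Pi.single w (v w) : Finset (Fin n) → ℝ) = v w • Pi.single w 1 := by
      rw [← Pi.single_smul]; simp
    rw [this, map_smul, smul_eq_mul, mul_comm]
  have hc : (fun _ => c) ∈ B := fun w _ => le_rfl
  have key : ∀ w (x : ℝ), (w ∈ F → 0 ≤ x) → t < g (fun _ => c) + x * e w := by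
    intro w x hx
    have : t < g ((fun _ => c) + x • Pi.single w 1) := by
      apply h3
      intro w' hw'
      simp only [Pi.add_apply, Pi.smul_apply, smul_eq_mul]
      by_cases hww : w' = w
      · subst hww
        simp [hx hw']
      · simp [hww]
    rwa [map_add, map_smul, smul_eq_mul] at this
  have he0 : ∀ w, 0 ≤ e w := by
    intro w
    by_contra hneg
    push Not at hneg
    have hcc := h3 _ hc
    have := key w ((g (fun _ => c) - t) / (- e w)) (fun _ => by
      apply div_nonneg <;> linarith)
    have h4 : (g (fun _ => c) - t) / (- e w) * e w = -(g (fun _ => c) - t) := by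
      have := hneg.ne
      rw [div_neg, neg_mul, div_mul_cancel₀ _ this]
    linarith
  have heF : ∀ w, e w ≠ 0 → w ∈ F := by
    intro w hw
    by_contra hF
    have := key w ((t - g (fun _ => c)) / (e w)) (fun h => absurd h hF)
    rw [div_mul_cancel₀ _ hw] at this
    linarith
  have hsimp : ∀ i, ∑ w, e w * (if i ∈ w then 1 else 0) < ∑ w, e w * c := by
    intro i
    have := h1 (L (Pi.single i 1)) ⟨_, single_mem_stdSimplex ℝ i, rfl⟩
    have hcc := h3 _ hc
    rw [hg] at this hcc
    have h5 : ∀ w, L (Pi.single i 1) w = if i ∈ w then 1 else 0 := by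
      intro w
      simp [L]
    simp only [h5] at this
    linarith
  have hpos : 0 < ∑ w, e w := by
    rcases (Finset.sum_nonneg fun w (_ : w ∈ univ) => he0 w).lt_or_eq with h | h
    · exact h
    · have hz := (Finset.sum_eq_zero_iff_of_nonneg fun w (_ : w ∈ univ) => he0 w).1 h.symm
      have := hsimp ⟨0, hn⟩
      rw [Finset.sum_congr rfl (fun w hw => by rw [hz w hw, zero_mul]),
        Finset.sum_congr rfl (g := fun _ => (0:ℝ)) (s₁ := univ) (f := fun w => e w * c) (fun w hw => by rw [hz w hw, zero_mul])] at this
      exact absurd this (lt_irrefl _)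
  refine ⟨fun w => e w / ∑ w, e w, fun w => div_nonneg (he0 w) hpos.le, ?_, ?_, ?_⟩
  · rw [← Finset.sum_div, div_self hpos.ne']
  · intro w hw
    apply heF
    intro h0
    simp [h0] at hw
  · intro i
    have := hsimp i
    rw [← Finset.sum_mul] at this
    have h6 : ∑ w, e w / (∑ w, e w) * (if i ∈ w then (1:ℝ) else 0)
      = (∑ w, e w * (if i ∈ w then (1:ℝ) else 0)) / ∑ w, e w := by
      rw [Finset.sum_div]
      exact Finset.sum_congr rfl fun w _ => by ring
    rw [h6, div_lt_iff₀ hpos]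
    linarith

lemma greedy_s2 {n : ℕ} (F : Finset (Finset (Fin n))) (K : ℝ) (hK : 1 ≤ K) (P : Fin n → ℝ)
    (hP : ∀ i, 0 ≤ P i) (hP1 : ∑ i, P i = 1) (hF : ∀ w ∈ F, 1 ≤ K * ∑ i ∈ w, P i) (t : ℕ) :
    ∃ H : Finset (Fin n), H.card ≤ t ∧
      ((F.filter (fun w => Disjoint H w)).card : ℝ) ≤ F.card * (1 - 1 / K) ^ t := by
  classical
  induction t with
  | zero => exact ⟨∅, by simp, by simp⟩
  | succ t ih =>
    obtain ⟨H, hH, hU⟩ := ih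
    set U := F.filter (fun w => Disjoint H w) with hUdef
    have hK0 : 0 < K := by linarith
    have h1 : ∑ i, P i * (U.card / K) ≤ ∑ i, P i * ((U.filter (fun w => i ∈ w)).card : ℝ) := by
      rw [← Finset.sum_mul, hP1, one_mul]
      have : ∀ i, P i * ((U.filter (fun w => i ∈ w)).card : ℝ)
          = ∑ w ∈ U, if i ∈ w then P i else 0 := by
        intro i
        rw [← Finset.sum_filter, Finset.sum_const, nsmul_eq_mul, mul_comm]
      rw [Finset.sum_congr rfl fun i _ => this i, Finset.sum_comm]
      have h2 : ∀ w ∈ U, 1 / K ≤ ∑ i, if i ∈ w then P i else 0 := by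
        intro w hw
        have := hF w (Finset.mem_filter.1 hw).1
        rw [div_le_iff₀ hK0, Finset.sum_ite_mem, Finset.univ_inter]
        linarith
      have := Finset.sum_le_sum h2
      rw [Finset.sum_const, nsmul_eq_mul] at this
      rw [div_eq_mul_one_div]
      exact this
    have hne : (Finset.univ : Finset (Fin n)).Nonempty := by
      by_contra h
      rw [Finset.not_nonempty_iff_eq_empty] at h
      rw [h] at hP1
      simp at hP1
    have : ∃ i, (U.card / K : ℝ) ≤ ((U.filter (fun w => i ∈ w)).card : ℝ) := by
      by_contra hcon
      push Not at hcon
      have h3 : ∃ i ∈ Finset.univ, 0 < P i := by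
        by_contra h4
        push Not at h4
        have := Finset.sum_nonpos h4
        linarith
      obtain ⟨i, _, hi⟩ := h3
      have := Finset.sum_lt_sum (s := Finset.univ) (f := fun i => P i * ((U.filter (fun w => i ∈ w)).card : ℝ)) (g := fun i => P i * (U.card / K))
        (fun i _ => mul_le_mul_of_nonneg_left (hcon i).le (hP i))
        ⟨i, Finset.mem_univ i, mul_lt_mul_of_pos_left (hcon i) hi⟩
      linarith
    obtain ⟨i, hi⟩ := this
    refine ⟨insert i H, (Finset.card_insert_le _ _).trans (by omega), ?_⟩
    have h5 : F.filter (fun w => Disjoint (insert i H) w) = U.filter (fun w => ¬ i ∈ w) := by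
      ext w
      simp only [hUdef, Finset.mem_filter, Finset.disjoint_insert_left]
      tauto
    have h6 := Finset.card_filter_add_card_filter_not (s := U) (fun w => i ∈ w)
    have h6' : ((U.filter (fun w => i ∈ w)).card : ℝ) + ((U.filter (fun w => ¬ i ∈ w)).card : ℝ) = U.card := by
      exact_mod_cast h6
    rw [h5, pow_succ, ← mul_assoc]
    have h7 : (0:ℝ) ≤ 1 - 1 / K := by
      rw [sub_nonneg, div_le_one hK0]; exact hK
    calc ((U.filter (fun w => ¬ i ∈ w)).card : ℝ) ≤ U.card * (1 - 1 / K) := by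
          rw [mul_sub, mul_one, mul_one_div]; linarith
      _ ≤ _ := mul_le_mul_of_nonneg_right hU h7

lemma mobius {n : ℕ} (f : Finset (Fin n) → ℝ) (x : Finset (Fin n)) :
    f x = ∑ s ∈ x.powerset, coeff f s := by
  classical
  unfold coeff
  have h1 : ∀ s ∈ x.powerset, ∑ t ∈ s.powerset, (-1 : ℝ) ^ (s.card - t.card) * f t
      = ∑ t ∈ x.powerset, if t ⊆ s then (-1 : ℝ) ^ (s.card - t.card) * f t else 0 := by
    intro s hs
    rw [← Finset.sum_filter]
    apply Finset.sum_congr _ (fun _ _ => rfl)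
    ext t
    simp only [Finset.mem_powerset, Finset.mem_filter] at *
    exact ⟨fun h => ⟨h.trans hs, h⟩, fun h => h.2⟩
  rw [Finset.sum_congr rfl h1, Finset.sum_comm]
  have h2 : ∀ t ∈ x.powerset, (∑ s ∈ x.powerset, if t ⊆ s then (-1 : ℝ) ^ (s.card - t.card) * f t else 0)
      = if t = x then f t else 0 := by
    intro t ht
    rw [Finset.mem_powerset] at ht
    rw [← Finset.sum_filter, ← Finset.sum_mul]
    have h3 : ∑ s ∈ x.powerset with t ⊆ s, (-1 : ℝ) ^ (s.card - t.card)
        = ∑ u ∈ (x \ t).powerset, (-1 : ℝ) ^ u.card := by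
      refine Finset.sum_bij' (fun s _ => s \ t) (fun u _ => u ∪ t) ?_ ?_ ?_ ?_ ?_
      · intro s hs
        simp only [Finset.mem_powerset, Finset.mem_filter] at *
        exact Finset.sdiff_subset_sdiff hs.1 le_rfl
      · intro u hu
        simp only [Finset.mem_powerset, Finset.mem_filter] at *
        exact ⟨Finset.union_subset (hu.trans Finset.sdiff_subset) ht, Finset.subset_union_right⟩
      · intro s hs
        simp only [Finset.mem_powerset, Finset.mem_filter] at *
        exact Finset.sdiff_union_of_subset hs.2
      · intro u hu
        simp only [Finset.mem_powerset] at *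
        rw [Finset.union_sdiff_right]
        exact Finset.sdiff_eq_self_of_disjoint (Finset.disjoint_of_subset_left hu Finset.sdiff_disjoint)
      · intro s hs
        simp only [Finset.mem_powerset, Finset.mem_filter] at *
        rw [Finset.card_sdiff_of_subset hs.2]
    rw [h3]
    have h4 := Finset.sum_powerset_neg_one_pow_card (x := x \ t)
    have h5 : ∑ u ∈ (x \ t).powerset, (-1 : ℝ) ^ u.card = if x \ t = ∅ then 1 else 0 := by
      exact_mod_cast congrArg (Int.cast : ℤ → ℝ) h4
    rw [h5]
    have : x \ t = ∅ ↔ t = x := by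
      rw [Finset.sdiff_eq_empty_iff_subset]
      exact ⟨fun h => ht.antisymm h, fun h => h ▸ le_rfl⟩
    simp only [this, ite_mul, one_mul, zero_mul]
  rw [Finset.sum_congr rfl h2]
  simp

lemma exists_mon {n : ℕ} (f : Finset (Fin n) → ℝ) (z w : Finset (Fin n)) (hw : w ∈ W f z) :
    ∃ s, coeff f s ≠ 0 ∧ s \ z ⊆ w ∧ s \ z ∈ W f z := by
  classical
  induction w using Finset.strongInduction with
  | H w ih =>
    by_contra hcon
    push Not at hcon
    have hprop : ∀ v, v ⊂ w → f (z ∪ v) = f z := by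
      intro v hv
      by_contra hne
      obtain ⟨s, h1, h2, h3⟩ := ih v hv ⟨hv.1.trans hw.1, hne⟩
      exact hcon s h1 (h2.trans hv.1) h3
    let g : Finset (Fin n) → ℝ := fun v => ∑ s with s \ z = v, coeff f s
    have hg : ∀ v, v ⊆ w → f (z ∪ v) = ∑ v' ∈ v.powerset, g v' := by
      intro v hv
      rw [mobius f]
      have : ∀ s ∈ (z ∪ v).powerset, s \ z ∈ v.powerset := by
        intro s hs
        rw [Finset.mem_powerset] at *
        exact sdiff_le_iff.2 hs
      rw [← Finset.sum_fiberwise_of_maps_to this]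
      refine Finset.sum_congr rfl fun v' hv' => ?_
      apply Finset.sum_congr _ fun _ _ => rfl
      ext s
      simp only [Finset.mem_filter, Finset.mem_powerset, Finset.mem_univ, true_and,
        and_iff_right_iff_imp] at *
      intro h
      exact sdiff_le_iff.1 (h.le.trans hv')
    have hg0 : g ∅ = f z := by
      have := hg ∅ (by simp)
      simpa using this.symm
    have hgv : ∀ v, v ⊂ w → v ≠ ∅ → g v = 0 := by
      intro v
      induction v using Finset.strongInduction with
      | H v ihv =>
        intro hv hv0
        have h1 := hg v hv.1
        rw [hprop v hv, ← Finset.add_sum_erase _ _ (Finset.mem_powerset_self v),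
          ← Finset.add_sum_erase _ _ (a := ∅) (by simpa using hv0.symm), Finset.sum_eq_zero, hg0] at h1
        · linarith
        · intro u hu
          simp only [Finset.mem_erase, Finset.mem_powerset] at hu
          have : u ⊂ v := Finset.ssubset_iff_subset_ne.2 ⟨hu.2.2, hu.2.1⟩
          exact ihv u this (this.trans hv) hu.1
    have hw0 : w ≠ ∅ := by
      rintro rfl
      exact hw.2 (by simp)
    have hgw : g w = 0 := by
      apply Finset.sum_eq_zero
      intro s hs
      simp only [Finset.mem_filter, Finset.mem_univ, true_and] at hs
      by_contra hne
      exact hcon s hne hs.le (hs ▸ hw)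
    apply hw.2
    rw [hg w le_rfl, Finset.sum_eq_single ∅, hg0]
    · intro v hv hv0
      rw [Finset.mem_powerset] at hv
      by_cases hvw : v = w
      · rw [hvw, hgw]
      · exact hgv v (Finset.ssubset_iff_subset_ne.2 ⟨hv, hvw⟩) hv0
    · simp

lemma expect_prod {ι α : Type*} [Fintype ι] [DecidableEq ι] [Fintype α]
    (D : α → ℝ) (hD : ∑ w, D w = 1) (S : Finset ι) (g : ι → α → ℝ) :
    ∑ ω : ι → α, (∏ l, D (ω l)) * ∏ l ∈ S, g l (ω l) = ∏ l ∈ S, ∑ w, D w * g l w := by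
  have h1 : ∀ ω : ι → α, (∏ l, D (ω l)) * ∏ l ∈ S, g l (ω l)
      = ∏ l, D (ω l) * (if l ∈ S then g l (ω l) else 1) := by
    intro ω
    rw [Finset.prod_mul_distrib, Finset.prod_ite_mem, Finset.univ_inter]
  simp only [h1]
  rw [← Fintype.prod_sum (fun l w => D w * (if l ∈ S then g l w else 1))]
  rw [← Finset.univ_inter S, ← Finset.prod_ite_mem, Finset.univ_inter]
  refine Finset.prod_congr rfl fun l _ => ?_
  by_cases h : l ∈ S <;> simp [h, hD]

lemma exists_of_expect {Ω : Type*} [Fintype Ω] (μ X : Ω → ℝ) (h0 : ∀ ω, 0 ≤ μ ω)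
    (h1 : ∑ ω, μ ω = 1) (B : ℝ) (hB : ∑ ω, μ ω * X ω ≤ B) : ∃ ω, 0 < μ ω ∧ X ω ≤ B := by
  by_contra hcon
  push Not at hcon
  have h3 : ∃ ω ∈ Finset.univ, 0 < μ ω := by
    by_contra h4
    push Not at h4
    have := Finset.sum_nonpos h4
    linarith
  obtain ⟨ω, _, hω⟩ := h3
  have h5 : ∑ ω, μ ω * B < ∑ ω, μ ω * X ω := by
    refine Finset.sum_lt_sum (fun i _ => ?_)
      ⟨ω, Finset.mem_univ ω, mul_lt_mul_of_pos_left (hcon ω hω) hω⟩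
    rcases (h0 i).lt_or_eq with h | h
    · exact mul_le_mul_of_nonneg_left (hcon i h).le h.le
    · rw [← h]; simp
  rw [← Finset.sum_mul, h1] at h5
  linarith

def Good {n : ℕ} (f : Finset (Fin n) → ℝ) (K : ℕ) : Prop :=
  ∀ y, ∃ P : Fin n → ℝ, (∀ i, 0 ≤ P i) ∧ ∑ i, P i = 1 ∧ ∀ w ∈ W f y, 1 ≤ (K : ℝ) * ∑ i ∈ w, P i

lemma Good.mono {n : ℕ} {f : Finset (Fin n) → ℝ} {K K' : ℕ} (h : Good f K) (hK : K ≤ K') :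
    Good f K' := by
  intro y
  obtain ⟨P, h0, h1, h2⟩ := h y
  refine ⟨P, h0, h1, fun w hw => (h2 w hw).trans ?_⟩
  have : (0:ℝ) ≤ ∑ i ∈ w, P i := Finset.sum_nonneg fun i _ => h0 i
  gcongr

lemma good_n {n : ℕ} (hn : 0 < n) (f : Finset (Fin n) → ℝ) : Good f n := by
  intro y
  have hn' : (n : ℝ) ≠ 0 := by positivity
  refine ⟨fun _ => 1 / n, fun _ => by positivity, by simp [hn'], ?_⟩
  intro w hw
  have hw0 : w.Nonempty := by
    rw [Finset.nonempty_iff_ne_empty]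
    rintro rfl
    exact hw.2 (by simp)
  have : (1:ℝ) ≤ w.card := by exact_mod_cast hw0.card_pos
  rw [Finset.sum_const, nsmul_eq_mul]
  field_simp
  exact this

/-- pairwise intersections among indices satisfying `p` -/
def pint {n l : ℕ} (p : Fin l → Prop) [DecidablePred p] (ω : Fin l → Finset (Fin n)) :
    Finset (Fin n) :=
  Finset.univ.filter fun x => ∃ j k, j ≠ k ∧ p j ∧ p k ∧ x ∈ ω j ∧ x ∈ ω k

lemma pint_sum {n l : ℕ} (p : Fin l → Prop) [DecidablePred p] (ω : Fin l → Finset (Fin n))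
    (P : Fin n → ℝ) (hP : ∀ i, 0 ≤ P i) :
    ∑ x ∈ pint p ω, P x ≤ ∑ x, ∑ j, ∑ k, if (j ≠ k ∧ p j ∧ p k) then
      P x * ((if x ∈ ω j then 1 else 0) * (if x ∈ ω k then 1 else 0)) else 0 := by
  have hnn : ∀ x j k, 0 ≤ if (j ≠ k ∧ p j ∧ p k) then
      P x * ((if x ∈ ω j then 1 else 0) * (if x ∈ ω k then 1 else 0)) else 0 := by
    intro x j k
    have := hP x
    split_ifs <;> simp [this]
  have hnn2 : ∀ x j, 0 ≤ ∑ k, if (j ≠ k ∧ p j ∧ p k) then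
      P x * ((if x ∈ ω j then 1 else 0) * (if x ∈ ω k then 1 else 0)) else 0 :=
    fun x j => Finset.sum_nonneg fun k _ => hnn x j k
  unfold pint
  rw [Finset.sum_filter]
  refine Finset.sum_le_sum fun x _ => ?_
  split_ifs with h
  · obtain ⟨j, k, hjk, hj, hk, hxj, hxk⟩ := h
    refine le_trans ?_ (Finset.single_le_sum (fun j _ => hnn2 x j) (Finset.mem_univ j))
    refine le_trans ?_ (Finset.single_le_sum (fun k _ => hnn x j k) (Finset.mem_univ k))
    simp [hjk, hj, hk, hxj, hxk]
  · exact Finset.sum_nonneg fun j _ => hnn2 x j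

/-- expected mass of `u`, base independent -/
lemma expect_u {n l : ℕ} (D : Finset (Fin n) → ℝ) (hD0 : ∀ w, 0 ≤ D w) (hD : ∑ w, D w = 1)
    (δ : ℝ) (hδ : ∀ i, ∑ w, D w * (if i ∈ w then 1 else 0) ≤ δ)
    (P : Fin n → ℝ) (hP : ∀ i, 0 ≤ P i) (hP1 : ∑ i, P i = 1) :
    ∑ ω : Fin l → Finset (Fin n), (∏ j, D (ω j)) * ∑ x ∈ pint (fun _ => True) ω, P x
      ≤ (l : ℝ) ^ 2 * δ ^ 2 := by
  have hq0 : ∀ i, 0 ≤ ∑ w, D w * (if i ∈ w then (1:ℝ) else 0) := fun i =>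
    Finset.sum_nonneg fun w _ => mul_nonneg (hD0 w) (by split_ifs <;> norm_num)
  calc _ ≤ ∑ ω : Fin l → Finset (Fin n), (∏ j, D (ω j)) * _ :=
        Finset.sum_le_sum fun ω _ => mul_le_mul_of_nonneg_left (pint_sum _ ω P hP)
          (Finset.prod_nonneg fun j _ => hD0 _)
    _ = ∑ x, ∑ j : Fin l, ∑ k : Fin l, ∑ ω : Fin l → Finset (Fin n), (∏ j, D (ω j)) *
          (if (j ≠ k ∧ True ∧ True) then
      P x * ((if x ∈ ω j then 1 else 0) * (if x ∈ ω k then 1 else 0)) else 0) := by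
        simp only [Finset.mul_sum]
        rw [Finset.sum_comm]
        refine Finset.sum_congr rfl fun x _ => ?_
        rw [Finset.sum_comm]
        refine Finset.sum_congr rfl fun j _ => ?_
        rw [Finset.sum_comm]
    _ ≤ ∑ x, ∑ j : Fin l, ∑ k : Fin l, P x * δ ^ 2 := by
        refine Finset.sum_le_sum fun x _ => Finset.sum_le_sum fun j _ =>
          Finset.sum_le_sum fun k _ => ?_
        by_cases hjk : j = k
        · simp only [hjk, ne_eq, not_true_eq_false, false_and, if_false, mul_zero,
            Finset.sum_const_zero]
          exact mul_nonneg (hP x) (sq_nonneg _)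
        · simp only [ne_eq, hjk, not_false_eq_true, and_self, if_true]
          have := expect_prod (ι := Fin l) D hD {j, k} (fun _ w => if x ∈ w then 1 else 0)
          simp only [Finset.prod_pair hjk] at this
          have h2 : ∑ ω : Fin l → Finset (Fin n), (∏ j, D (ω j)) *
              (P x * ((if x ∈ ω j then 1 else 0) * (if x ∈ ω k then 1 else 0)))
              = P x * ∑ ω : Fin l → Finset (Fin n), (∏ j, D (ω j)) *
              (((if x ∈ ω j then 1 else 0) * (if x ∈ ω k then 1 else 0))) := by
            rw [Finset.mul_sum]
            exact Finset.sum_congr rfl fun ω _ => by ring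
          rw [h2, this, ← sq]
          have := hq0 x
          have := hδ x
          have := hP x
          gcongr
    _ = _ := by
        simp only [Finset.sum_const, Finset.card_univ, Fintype.card_fin, nsmul_eq_mul]
        rw [← Finset.mul_sum, ← Finset.mul_sum, ← Finset.sum_mul, hP1]
        ring

lemma expect_ui {n l : ℕ} (D : Finset (Fin n) → ℝ) (hD0 : ∀ w, 0 ≤ D w) (hD : ∑ w, D w = 1)
    (δ : ℝ) (hδ : ∀ i, ∑ w, D w * (if i ∈ w then 1 else 0) ≤ δ)
    (Q : Finset (Fin n) → Fin n → ℝ) (hP : ∀ w i, 0 ≤ Q w i) (hP1 : ∀ w, ∑ i, Q w i = 1)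
    (i : Fin l) :
    ∑ ω : Fin l → Finset (Fin n), (∏ j, D (ω j)) * ∑ x ∈ pint (fun j => j ≠ i) ω, Q (ω i) x
      ≤ (l : ℝ) ^ 2 * δ ^ 2 := by
  have hq0 : ∀ i, 0 ≤ ∑ w, D w * (if i ∈ w then (1:ℝ) else 0) := fun i =>
    Finset.sum_nonneg fun w _ => mul_nonneg (hD0 w) (by split_ifs <;> norm_num)
  have hR0 : ∀ x, 0 ≤ ∑ w, D w * Q w x := fun i =>
    Finset.sum_nonneg fun w _ => mul_nonneg (hD0 w) (hP _ _)
  calc _ ≤ ∑ ω : Fin l → Finset (Fin n), (∏ j, D (ω j)) * _ :=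
        Finset.sum_le_sum fun ω _ => mul_le_mul_of_nonneg_left (pint_sum _ ω (Q (ω i)) (hP _))
          (Finset.prod_nonneg fun j _ => hD0 _)
    _ = ∑ x, ∑ j : Fin l, ∑ k : Fin l, ∑ ω : Fin l → Finset (Fin n), (∏ j, D (ω j)) *
          (if (j ≠ k ∧ j ≠ i ∧ k ≠ i) then
      Q (ω i) x * ((if x ∈ ω j then 1 else 0) * (if x ∈ ω k then 1 else 0)) else 0) := by
        simp only [Finset.mul_sum]
        rw [Finset.sum_comm]
        refine Finset.sum_congr rfl fun x _ => ?_
        rw [Finset.sum_comm]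
        refine Finset.sum_congr rfl fun j _ => ?_
        rw [Finset.sum_comm]
    _ ≤ ∑ x, ∑ j : Fin l, ∑ k : Fin l, (∑ w, D w * Q w x) * δ ^ 2 := by
        refine Finset.sum_le_sum fun x _ => Finset.sum_le_sum fun j _ =>
          Finset.sum_le_sum fun k _ => ?_
        by_cases hjk : j ≠ k ∧ j ≠ i ∧ k ≠ i
        · simp only [if_pos hjk]
          obtain ⟨h1, h2, h3⟩ := hjk
          have := expect_prod (ι := Fin l) D hD {i, j, k}
            (fun a w => if a = i then Q w x else if x ∈ w then 1 else 0)
          rw [Finset.prod_insert (by simp [h2.symm, h3.symm]), Finset.prod_pair h1] at this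
          have h5 : ∀ ω : Fin l → Finset (Fin n), ∏ a ∈ ({i, j, k} : Finset (Fin l)),
              (if a = i then Q (ω a) x else if x ∈ ω a then 1 else 0)
              = Q (ω i) x * ((if x ∈ ω j then 1 else 0) * (if x ∈ ω k then 1 else 0)) := by
            intro ω
            rw [Finset.prod_insert (by simp [h2.symm, h3.symm]), Finset.prod_pair h1]
            simp only [if_true, if_neg h2, if_neg h3]
          simp only [h5] at this
          simp only [if_true, if_neg h2, if_neg h3] at this
          rw [this, ← sq]
          have := hq0 x
          have := hδ x
          have := hR0 x
          gcongr
        · simp only [if_neg hjk, mul_zero, Finset.sum_const_zero]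
          exact mul_nonneg (hR0 x) (sq_nonneg _)
    _ = _ := by
        simp only [Finset.sum_const, Finset.card_univ, Fintype.card_fin, nsmul_eq_mul]
        rw [← Finset.mul_sum, ← Finset.mul_sum, ← Finset.sum_mul, Finset.sum_comm]
        simp only [← Finset.mul_sum, hP1, mul_one, hD]
        ring

lemma good_bound {n : ℕ} (hn : 0 < n) (m : ℕ) (f : Finset (Fin n) → ℝ)
    (hm : ∀ (z : Finset (Fin n)) (k : ℕ) (w : Fin k → Finset (Fin n)),
          (∀ i, w i ∈ W f z) → (∀ i j, i ≠ j → Disjoint (w i) (w j)) → k ≤ m) :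
    Good f (64 * (m + 1) ^ 2) := by
  classical
  have hex : ∃ K, Good f K := ⟨n, good_n hn f⟩
  set K := Nat.find hex with hKdef
  have hKg : Good f K := Nat.find_spec hex
  by_cases hKle : K ≤ 64 * (m + 1) ^ 2
  · exact hKg.mono hKle
  exfalso
  push Not at hKle
  have hK2 : 2 ≤ K := by
    have : 0 < (m + 1) ^ 2 := by positivity
    omega
  have hmin : ¬ Good f (K - 1) := Nat.find_min hex (by omega)
  unfold Good at hmin
  push Not at hmin
  obtain ⟨z, hz⟩ := hmin
  have hcast : ((K - 1 : ℕ) : ℝ) = (K : ℝ) - 1 := by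
    rw [Nat.cast_sub (by omega)]; simp
  have hK2' : (2:ℝ) ≤ K := by exact_mod_cast hK2
  have hK1pos : (0:ℝ) < (K:ℝ) - 1 := by linarith
  obtain ⟨D, hD0, hD1, hDF, hDi⟩ := alt_lem hn (Finset.univ.filter fun w => w ∈ W f z)
    (1 / ((K:ℝ) - 1)) (by
      rintro ⟨P, h0, h1, h2⟩
      obtain ⟨w, hw, hlt⟩ := hz P h0 h1
      have := h2 w (by simpa using hw)
      rw [hcast] at hlt
      rw [div_le_iff₀ hK1pos] at this
      linarith)
  have hDi' : ∀ i, ∑ w, D w * (if i ∈ w then 1 else 0) ≤ 2 / (K:ℝ) := by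
    intro i
    refine (hDi i).le.trans ?_
    rw [div_le_div_iff₀ hK1pos (by linarith)]
    linarith
  choose P hP0 hP1 hPW using hKg
  set l := 2 * (m + 1) with hl
  let μ : (Fin l → Finset (Fin n)) → ℝ := fun ω => ∏ j, D (ω j)
  have hμ0 : ∀ ω, 0 ≤ μ ω := fun ω => Finset.prod_nonneg fun j _ => hD0 _
  have hμ1 : ∑ ω, μ ω = 1 := by
    have := expect_prod (ι := Fin l) D hD1 ∅ (fun _ _ => 1)
    simpa using this
  let u : (Fin l → Finset (Fin n)) → Finset (Fin n) := fun ω => pint (fun _ => True) ω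
  let v : Fin l → (Fin l → Finset (Fin n)) → Finset (Fin n) := fun i ω => pint (fun j => j ≠ i) ω
  let X : (Fin l → Finset (Fin n)) → ℝ := fun ω =>
    l * ∑ x ∈ u ω, P z x + ∑ i, ∑ x ∈ v i ω, P (z ∪ ω i) x
  have hX : ∑ ω, μ ω * X ω ≤ 2 * l * ((l:ℝ)^2 * (2 / K)^2) := by
    have e1 := expect_u (l := l) D hD0 hD1 _ hDi' (P z) (hP0 z) (hP1 z)
    have e2 : ∀ i : Fin l, _ := fun i => expect_ui (l := l) D hD0 hD1 _ hDi' (fun w => P (z ∪ w))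
      (fun w => hP0 _) (fun w => hP1 _) i
    have e3 : ∑ ω, μ ω * X ω = l * ∑ ω, μ ω * ∑ x ∈ u ω, P z x
        + ∑ i, ∑ ω, μ ω * ∑ x ∈ v i ω, P (z ∪ ω i) x := by
      rw [Finset.sum_comm (s := (Finset.univ : Finset (Fin l))), Finset.mul_sum,
        ← Finset.sum_add_distrib]
      refine Finset.sum_congr rfl fun ω _ => ?_
      simp only [X]
      rw [mul_add, Finset.mul_sum (s := (Finset.univ : Finset (Fin l)))]
      ring
    have e4 := Finset.sum_le_sum fun i (_ : i ∈ Finset.univ) => e2 i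
    rw [Finset.sum_const, Finset.card_univ, Fintype.card_fin, nsmul_eq_mul] at e4
    have e5 := mul_le_mul_of_nonneg_left e1 (Nat.cast_nonneg (α := ℝ) l)
    rw [e3]
    calc _ ≤ (l:ℝ) * ((l:ℝ)^2 * (2 / K)^2) + l * ((l:ℝ)^2 * (2 / K)^2) := add_le_add e5 e4
      _ = _ := by ring
  obtain ⟨ω, hω, hXω⟩ := exists_of_expect μ X hμ0 hμ1 _ hX
  have hl0 : (0:ℝ) < l := by rw [hl]; positivity
  have hKX : K * X ω < l / 2 := by
    have hK0 : (0:ℝ) < K := by linarith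
    have hKl : (16:ℝ) * l ^ 2 < K := by
      have : 16 * l ^ 2 < K := by rw [hl]; nlinarith
      exact_mod_cast this
    calc K * X ω ≤ K * (2 * l * ((l:ℝ)^2 * (2 / K)^2)) := by gcongr
      _ = 8 * l ^ 3 / K := by field_simp; ring
      _ < l / 2 := by
        rw [div_lt_div_iff₀ hK0 (by norm_num)]
        nlinarith
  have hK0 : (0:ℝ) < K := by linarith
  have hs1 : 0 ≤ ∑ x ∈ u ω, P z x := Finset.sum_nonneg fun x _ => hP0 _ _
  have hs2 : ∀ i, 0 ≤ ∑ x ∈ v i ω, P (z ∪ ω i) x := fun i => Finset.sum_nonneg fun x _ => hP0 _ _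
  have hgen : ∀ y t, f (y ∪ t) ≠ f y → 1 ≤ (K:ℝ) * ∑ x ∈ t, P y x := by
    intro y t ht
    have h1 : t \ y ∈ W f y := by
      refine ⟨?_, by rwa [Finset.union_sdiff_self_eq_union]⟩
      intro x hx
      simp only [Finset.mem_sdiff, Finset.mem_compl] at *
      exact hx.2
    refine (hPW y _ h1).trans (mul_le_mul_of_nonneg_left ?_ hK0.le)
    exact Finset.sum_le_sum_of_subset_of_nonneg Finset.sdiff_subset fun x _ _ => hP0 _ _
  have hu : f (z ∪ u ω) = f z := by
    by_contra hne
    have h1 := hgen _ _ hne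
    have h2 : (l:ℝ) ≤ K * X ω := by
      have h3 : 0 ≤ ∑ i, ∑ x ∈ v i ω, P (z ∪ ω i) x := Finset.sum_nonneg fun i _ => hs2 i
      have h4 := mul_nonneg hK0.le h3
      have h5 := mul_le_mul_of_nonneg_left h1 hl0.le
      simp only [X]
      linarith
    linarith
  let Bad : Finset (Fin l) := Finset.univ.filter fun i => f (z ∪ ω i ∪ v i ω) ≠ f (z ∪ ω i)
  have hBad : (Bad.card : ℝ) ≤ K * X ω := by
    have h1 : (Bad.card : ℝ) ≤ ∑ i ∈ Bad, K * ∑ x ∈ v i ω, P (z ∪ ω i) x := by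
      have := Finset.sum_le_sum (s := Bad) (f := fun _ => (1:ℝ)) (g := fun i => K * ∑ x ∈ v i ω, P (z ∪ ω i) x)
        (fun i hi => hgen _ _ (Finset.mem_filter.1 hi).2)
      simpa using this
    have h2 : ∑ i ∈ Bad, K * ∑ x ∈ v i ω, P (z ∪ ω i) x ≤ ∑ i, K * ∑ x ∈ v i ω, P (z ∪ ω i) x :=
      Finset.sum_le_sum_of_subset_of_nonneg (Finset.subset_univ _)
        fun i _ _ => mul_nonneg hK0.le (hs2 i)
    have h1 := h1.trans h2
    rw [← Finset.mul_sum] at h1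
    have h4 := mul_nonneg hK0.le (mul_nonneg hl0.le hs1)
    simp only [X]
    linarith
  have hBadc : Bad.card < m + 1 := by
    have h1 : (Bad.card : ℝ) < l / 2 := hBad.trans_lt hKX
    have h2 : (l:ℝ) = 2 * (m + 1) := by rw [hl]; push_cast; ring
    have h3 : (Bad.card : ℝ) < (m + 1 : ℕ) := by push_cast; linarith
    exact_mod_cast h3
  have hG : m < Badᶜ.card := by
    rw [Finset.card_compl, Fintype.card_fin]
    omega
  have hωW : ∀ i, ω i ∈ W f z := by
    intro i
    have : D (ω i) ≠ 0 := fun h0 => hω.ne' (Finset.prod_eq_zero (Finset.mem_univ i) h0)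
    simpa using hDF _ this
  have huv : ∀ i, z ∪ u ω ∪ (ω i \ (u ω)) = z ∪ ω i ∪ v i ω := by
    intro i
    ext x
    simp only [Finset.mem_union, Finset.mem_sdiff, u, v, pint, Finset.mem_filter,
      Finset.mem_univ, true_and]
    constructor
    · rintro ((h | ⟨j, k, hjk, hj, hk⟩) | h)
      · exact Or.inl (Or.inl h)
      · by_cases hji : j = i
        · subst hji; exact Or.inl (Or.inr hj)
        by_cases hki : k = i
        · subst hki; exact Or.inl (Or.inr hk)
        exact Or.inr ⟨j, k, hjk, hji, hki, hj, hk⟩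
      · exact Or.inl (Or.inr h.1)
    · rintro ((h | h) | ⟨j, k, hjk, _, _, hj, hk⟩)
      · exact Or.inl (Or.inl h)
      · by_cases hx : ∃ j k, j ≠ k ∧ x ∈ ω j ∧ x ∈ ω k
        · exact Or.inl (Or.inr hx)
        · exact Or.inr ⟨h, hx⟩
      · exact Or.inl (Or.inr ⟨j, k, hjk, hj, hk⟩)
  have := hm (z ∪ u ω) (Badᶜ.card) (fun a => ω (Badᶜ.equivFin.symm a).1 \ u ω) ?_ ?_
  · omega
  · intro a
    have hmem := (Badᶜ.equivFin.symm a).2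
    set i := (Badᶜ.equivFin.symm a).1
    have hi : f (z ∪ ω i ∪ v i ω) = f (z ∪ ω i) := by
      by_contra hne
      exact (Finset.mem_compl.1 hmem) (Finset.mem_filter.2 ⟨Finset.mem_univ _, hne⟩)
    refine ⟨?_, ?_⟩
    · intro x hx
      have hx' := Finset.mem_sdiff.1 hx
      have := (hωW i).1 hx'.1
      simp only [Finset.mem_compl, Finset.mem_union] at *
      exact fun h => h.elim this hx'.2
    · rw [huv, hi, hu]
      exact (hωW i).2
  · intro a b hab
    rw [Finset.disjoint_left]
    intro x hxa hxb
    have ha := Finset.mem_sdiff.1 hxa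
    have hb := Finset.mem_sdiff.1 hxb
    apply ha.2
    refine Finset.mem_filter.2 ⟨Finset.mem_univ _, _, _, ?_, trivial, trivial, ha.1, hb.1⟩
    intro h
    exact hab (Badᶜ.equivFin.symm.injective (Subtype.ext h))

/-- For real-valued `f` with sparsity `r ≥ 2` and monotone block sensitivity at most `m`,
every `W(f,z)` has a hitting set of size `≤ C·m²·log₂ r`, i.e. `HSC(f) = O(m²·log r)`. -/
theorem stmt2 :
    ∃ C : ℝ, 0 < C ∧
      ∀ (n m : ℕ) (f : Finset (Fin n) → ℝ),
        2 ≤ sparsity f →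
        -- MBS(f) ≤ m: any pairwise disjoint collection in some W(f,z) has size ≤ m
        (∀ (z : Finset (Fin n)) (k : ℕ) (w : Fin k → Finset (Fin n)),
          (∀ i, w i ∈ W f z) → (∀ i j, i ≠ j → Disjoint (w i) (w j)) → k ≤ m) →
        ∀ z : Finset (Fin n),
          ∃ H : Finset (Fin n),
            (∀ w ∈ W f z, (H ∩ w).Nonempty) ∧
            (H.card : ℝ) ≤ C * (m : ℝ) ^ 2 * Real.logb 2 (sparsity f) := by
  classical
  refine ⟨257, by norm_num, ?_⟩
  intro n m f hr hm z
  by_cases hW : ∀ w, w ∉ W f z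
  · refine ⟨∅, fun w hw => absurd hw (hW w), ?_⟩
    have : (1:ℝ) ≤ sparsity f := by exact_mod_cast (by omega : 1 ≤ sparsity f)
    have := Real.logb_nonneg (b := 2) (by norm_num) this
    simp only [Finset.card_empty, Nat.cast_zero]
    positivity
  push Not at hW
  obtain ⟨w0, hw0⟩ := hW
  have hm1 : 1 ≤ m := hm z 1 (fun _ => w0) (fun _ => hw0)
    (fun i j hij => absurd (Subsingleton.elim i j) hij)
  have hn : 0 < n := by
    rcases Nat.eq_zero_or_pos n with h | h
    · subst h
      exact absurd (congrArg f (Subsingleton.elim (z ∪ w0) z)) hw0.2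
    · exact h
  obtain ⟨P, hP0, hP1, hPW⟩ := good_bound hn m f hm z
  let F : Finset (Finset (Fin n)) :=
    ((Finset.univ.filter fun s => coeff f s ≠ 0).image (fun s => s \ z)).filter fun w => w ∈ W f z
  have hFr : F.card ≤ sparsity f := by
    refine (Finset.card_filter_le _ _).trans (Finset.card_image_le.trans ?_)
    unfold sparsity
    rw [← Set.ncard_coe_finset]
    simp
  set r : ℝ := (sparsity f : ℝ) with hrdef
  have hr2 : (2:ℝ) ≤ r := by rw [hrdef]; exact_mod_cast hr
  have hFr' : (F.card : ℝ) ≤ r := by rw [hrdef]; exact_mod_cast hFr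
  set K : ℝ := ((64 * (m + 1) ^ 2 : ℕ) : ℝ) with hKdef
  have hm1' : (1:ℝ) ≤ m := by exact_mod_cast hm1
  have hKm : K ≤ 256 * (m:ℝ) ^ 2 := by
    rw [hKdef]; push_cast; nlinarith
  have hK1 : 1 ≤ K := by
    rw [hKdef]; push_cast; nlinarith
  have hK0 : 0 < K := by linarith
  let t := ⌊K * Real.log r⌋₊ + 1
  have hlog0 : 0 ≤ Real.log r := Real.log_nonneg (by linarith)
  have ht : K * Real.log r < t := by
    have := Nat.lt_floor_add_one (K * Real.log r)
    simpa [t] using this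
  have ht' : (t:ℝ) ≤ K * Real.log r + 1 := by
    have := Nat.floor_le (mul_nonneg hK0.le hlog0)
    simp only [t]; push_cast; linarith
  obtain ⟨H, hHt, hHF⟩ := greedy_s2 F K hK1 P hP0 hP1
    (fun w hw => hPW w (Finset.mem_filter.1 hw).2) t
  have hlt : r * (1 - 1 / K) ^ t < 1 := by
    have h1 : (1 - 1 / K) ^ t ≤ Real.exp (-(1 / K) * t) := by
      rw [mul_comm, Real.exp_nat_mul]
      apply pow_le_pow_left₀
      · rw [sub_nonneg, div_le_one hK0]; exact hK1
      · have := Real.add_one_le_exp (-(1 / K)); linarith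
    have h2 : r = Real.exp (Real.log r) := (Real.exp_log (by linarith)).symm
    calc r * (1 - 1 / K) ^ t ≤ r * Real.exp (-(1 / K) * t) := by gcongr
      _ = Real.exp (Real.log r + -(1 / K) * t) := by rw [Real.exp_add, ← h2]
      _ < 1 := by
        rw [Real.exp_lt_one_iff]
        have : Real.log r < t / K := by rw [lt_div_iff₀ hK0]; linarith
        have h3 : -(1 / K) * (t:ℝ) = - (t / K) := by ring
        linarith
  have hzero : F.filter (fun w => Disjoint H w) = ∅ := by
    rw [← Finset.card_eq_zero]
    have h7 : (0:ℝ) ≤ 1 - 1 / K := by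
      rw [sub_nonneg, div_le_one hK0]; exact hK1
    have h8 : (F.card : ℝ) * (1 - 1 / K) ^ t ≤ r * (1 - 1 / K) ^ t := by gcongr
    have : ((F.filter (fun w => Disjoint H w)).card : ℝ) < (1 : ℕ) := by
      push_cast; linarith
    have := Nat.cast_lt.1 this
    omega
  refine ⟨H, ?_, ?_⟩
  · intro w hw
    obtain ⟨s, hs, hsw, hsW⟩ := exists_mon f z w hw
    have hsF : s \ z ∈ F := Finset.mem_filter.2
      ⟨Finset.mem_image.2 ⟨s, by simpa using hs, rfl⟩, hsW⟩
    have : ¬ Disjoint H (s \ z) := fun hd => by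
      have : s \ z ∈ F.filter (fun w => Disjoint H w) := Finset.mem_filter.2 ⟨hsF, hd⟩
      rw [hzero] at this
      simp at this
    rw [Finset.not_disjoint_iff] at this
    obtain ⟨x, hx, hx'⟩ := this
    exact ⟨x, Finset.mem_inter.2 ⟨hx, hsw hx'⟩⟩
  · have hlog2 : 1 ≤ Real.logb 2 r := by
      rw [Real.le_logb_iff_rpow_le (by norm_num) (by linarith)]
      simpa using hr2
    have hll : Real.log r ≤ Real.logb 2 r := by
      unfold Real.logb
      rw [le_div_iff₀ (Real.log_pos (by norm_num))]
      have : Real.log 2 ≤ 1 := by have := Real.log_two_lt_d9; linarith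
      nlinarith
    have hHt' : (H.card : ℝ) ≤ t := by exact_mod_cast hHt
    have hmm : 1 ≤ (m:ℝ)^2 := by nlinarith
    calc (H.card : ℝ) ≤ K * Real.log r + 1 := hHt'.trans ht'
      _ ≤ 256 * (m:ℝ) ^ 2 * Real.logb 2 r + (m:ℝ)^2 * Real.logb 2 r := by
        apply add_le_add
        · gcongr
        · nlinarith
      _ = _ := by ring
end
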